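/- arXiv:1208.4936 — 4 statements merged into one kernel-verified Lean document; each statement's English description precedes it below -/
import Mathlib

section
/- Let 1 < p < ∞ and f ∈ L^p([0,1]²). Then K_p(f) ≤ (4/p')·I_p(f), where p' = p/(p−1). -/
open MeasureTheory Filter Set
open scoped ENNReal

noncomputable section

/-- A function of two real variables that is 1-periodic in each variable. -/
def BiPeriodic (f : ℝ → ℝ → ℝ) : Prop :=
  (∀ x y, f (x + 1) y = f x y) ∧ (∀ x y, f x (y + 1) = f x y)

/-- A 1-periodic function of one real variable. -/
def Periodic1 (g : ℝ → ℝ) : Prop := ∀ x, g (x + 1) = g x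

/-- The `L^p` norm of a function over `[0,1]^2` (as a value in `[0,∞]`). -/
noncomputable def lpNorm2 (p : ℝ) (f : ℝ → ℝ → ℝ) : ℝ≥0∞ :=
  (∫⁻ x in Set.Icc (0:ℝ) 1, ∫⁻ y in Set.Icc (0:ℝ) 1,
      ENNReal.ofReal (|f x y| ^ p)) ^ (1 / p)

/-- The `L^p` norm of a function over `[0,1]` (as a value in `[0,∞]`). -/
noncomputable def lpNorm1 (p : ℝ) (g : ℝ → ℝ) : ℝ≥0∞ :=
  (∫⁻ x in Set.Icc (0:ℝ) 1, ENNReal.ofReal (|g x| ^ p)) ^ (1 / p)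

/-- Membership in `L^p([0,1]^2)`: measurable, 1-periodic in each variable,
finite `L^p` norm. -/
def MemLp2 (p : ℝ) (f : ℝ → ℝ → ℝ) : Prop :=
  Measurable (Function.uncurry f) ∧ BiPeriodic f ∧ lpNorm2 p f < ⊤

/-- Membership in `L^p([0,1])` for 1-periodic functions of one variable. -/
def MemLp1 (p : ℝ) (g : ℝ → ℝ) : Prop :=
  Measurable g ∧ Periodic1 g ∧ lpNorm1 p g < ⊤

/-- The (total) `L^p` modulus of continuity `ω(f;δ)_p` of a bivariate function. -/
noncomputable def modulus2 (p : ℝ) (f : ℝ → ℝ → ℝ) (δ : ℝ) : ℝ≥0∞ :=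
  ⨆ (h : ℝ × ℝ) (_ : Real.sqrt (h.1 ^ 2 + h.2 ^ 2) ≤ δ),
    lpNorm2 p (fun x y => f (x + h.1) (y + h.2) - f x y)

/-- The `L^p` modulus of continuity `ω(g;δ)_p` of a univariate function. -/
noncomputable def modulus1 (p : ℝ) (g : ℝ → ℝ) (δ : ℝ) : ℝ≥0∞ :=
  ⨆ (h : ℝ) (_ : h ∈ Set.Icc 0 δ), lpNorm1 p (fun x => g (x + h) - g x)

/-- The mixed `L^p` modulus of continuity `ω(f;u,v)_p`. -/
noncomputable def mixedModulus (p : ℝ) (f : ℝ → ℝ → ℝ) (u v : ℝ) : ℝ≥0∞ :=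
  ⨆ (s : ℝ) (_ : s ∈ Set.Icc 0 u) (t : ℝ) (_ : t ∈ Set.Icc 0 v),
    lpNorm2 p (fun x y => f (x + s) (y + t) - f (x + s) y - f x (y + t) + f x y)

/-- `J_p(f) = ∫₀¹ t^{-1/p} ω(f;t)_p dt/t`. -/
noncomputable def Jp (p : ℝ) (f : ℝ → ℝ → ℝ) : ℝ≥0∞ :=
  ∫⁻ t in Set.Ioc (0:ℝ) 1, ENNReal.ofReal (t ^ (-(1/p)) / t) * modulus2 p f t

/-- `K_p(f) = ∫₀¹ t^{-1/p} [ω(f;t,1)_p + ω(f;1,t)_p] dt/t`. -/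
noncomputable def Kp (p : ℝ) (f : ℝ → ℝ → ℝ) : ℝ≥0∞ :=
  ∫⁻ t in Set.Ioc (0:ℝ) 1,
    ENNReal.ofReal (t ^ (-(1/p)) / t) * (mixedModulus p f t 1 + mixedModulus p f 1 t)

/-- `I_p(f) = ∫₀¹∫₀¹ (uv)^{-1/p} ω(f;u,v)_p (du/u)(dv/v)`. -/
noncomputable def Ip (p : ℝ) (f : ℝ → ℝ → ℝ) : ℝ≥0∞ :=
  ∫⁻ u in Set.Ioc (0:ℝ) 1, ∫⁻ v in Set.Ioc (0:ℝ) 1,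
    ENNReal.ofReal ((u * v) ^ (-(1/p)) / (u * v)) * mixedModulus p f u v

/-- The essential supremum norm of `f` over `[0,1]^2`. -/
noncomputable def supNorm2 (f : ℝ → ℝ → ℝ) : ℝ≥0∞ :=
  essSup (fun z : ℝ × ℝ => ENNReal.ofReal |f z.1 z.2|)
    (volume.restrict ((Set.Icc (0:ℝ) 1) ×ˢ (Set.Icc (0:ℝ) 1)))

/-- The Wiener `p`-variation of a 1-periodic function `g`, as a value in `[0,∞]`:
the supremum over partitions `x₀ < x₁ < ... < xₙ = x₀ + 1` of
`(∑ |g(x_{k+1}) - g(x_k)|^p)^{1/p}`. -/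
noncomputable def vp (p : ℝ) (g : ℝ → ℝ) : ℝ≥0∞ :=
  ⨆ (n : ℕ) (x : ℕ → ℝ) (_ : ∀ i < n, x i < x (i + 1)) (_ : x n = x 0 + 1),
    ENNReal.ofReal ((∑ k ∈ Finset.range n, |g (x (k + 1)) - g (x k)| ^ p) ^ (1 / p))

/-- The Hardy–Vitali type total `p`-variation of a bivariate function,
as a value in `[0,∞]`: the supremum over nets of
`(∑∑ |Δf(x_i,y_j)|^p)^{1/p}`. -/
noncomputable def vp2 (p : ℝ) (f : ℝ → ℝ → ℝ) : ℝ≥0∞ :=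
  ⨆ (m : ℕ) (n : ℕ) (x : ℕ → ℝ) (y : ℕ → ℝ)
    (_ : ∀ i < m, x i < x (i + 1)) (_ : x m = x 0 + 1)
    (_ : ∀ j < n, y j < y (j + 1)) (_ : y n = y 0 + 1),
    ENNReal.ofReal ((∑ i ∈ Finset.range m, ∑ j ∈ Finset.range n,
      |f (x (i + 1)) (y (j + 1)) - f (x (i + 1)) (y j)
        - f (x i) (y (j + 1)) + f (x i) (y j)| ^ p) ^ (1 / p))

/-- Membership in the Hardy class `H_p^{(2)}`: finite Vitali `p`-variation and
all linear sections of bounded `p`-variation. -/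
def MemHp2 (p : ℝ) (f : ℝ → ℝ → ℝ) : Prop :=
  vp2 p f < ⊤ ∧ (∀ x, vp p (fun y => f x y) < ⊤) ∧ (∀ y, vp p (fun x => f x y) < ⊤)

/-- Membership in the mixed norm class `V_p[V_p]`: all sections have bounded
`p`-variation and the functions `x ↦ v_p(f_x)`, `y ↦ v_p(f_y)` are themselves
of bounded `p`-variation. -/
def MemVpVp (p : ℝ) (f : ℝ → ℝ → ℝ) : Prop :=
  (∀ x, vp p (fun y => f x y) < ⊤) ∧ (∀ y, vp p (fun x => f x y) < ⊤) ∧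
  vp p (fun x => (vp p (fun y => f x y)).toReal) < ⊤ ∧
  vp p (fun y => (vp p (fun x => f x y)).toReal) < ⊤

/-- `W_p(f) = v_p(φ_p[f]) + v_p(ψ_p[f])`, where `φ_p[f](x) = v_p(f_x)` and
`ψ_p[f](y) = v_p(f_y)`. -/
noncomputable def Wp (p : ℝ) (f : ℝ → ℝ → ℝ) : ℝ≥0∞ :=
  vp p (fun x => (vp p (fun y => f x y)).toReal)
    + vp p (fun y => (vp p (fun x => f x y)).toReal)

/-- Membership in `L^p_0([0,1]^2)`: membership in `L^p([0,1]^2)` together with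
vanishing of the linear mean values `∫₀¹ f(x,t) dt` and `∫₀¹ f(t,y) dt` for a.e.
`x` resp. `y`. -/
def MemLp20 (p : ℝ) (f : ℝ → ℝ → ℝ) : Prop :=
  MemLp2 p f ∧ (∀ᵐ x : ℝ ∂volume, ∫ t in (0:ℝ)..1, f x t = 0) ∧
    (∀ᵐ y : ℝ ∂volume, ∫ t in (0:ℝ)..1, f t y = 0)

/-- `T` is a trigonometric polynomial of degree `(n,m)` in two variables. -/
def IsTrigPoly2 (n m : ℕ) (T : ℝ → ℝ → ℝ) : Prop :=
  ∃ a b c d : ℕ → ℕ → ℝ, ∀ x y : ℝ,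
    T x y = ∑ j ∈ Finset.range (n + 1), ∑ k ∈ Finset.range (m + 1),
      (a j k * Real.cos (2 * Real.pi * j * x) * Real.cos (2 * Real.pi * k * y)
        + b j k * Real.cos (2 * Real.pi * j * x) * Real.sin (2 * Real.pi * k * y)
        + c j k * Real.sin (2 * Real.pi * j * x) * Real.cos (2 * Real.pi * k * y)
        + d j k * Real.sin (2 * Real.pi * j * x) * Real.sin (2 * Real.pi * k * y))

end

/-!
Telescoping gives `ω(f; u, nv)_p ≤ n ω(f; u, v)_p`, by Minkowski's inequality and the translation
invariance of the norm of a periodic function. Taking `n = ⌈V / v⌉ ≤ 2V / v`, we get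
`v ω(f; u, V)_p ≤ 2V ω(f; u, v)_p`. For `V = 1`, multiply by `(uv)^{-1/p} / (uv)` and integrate over
the unit square: the left side becomes `∫₀¹ v^{-1/p} dv = p'` times the first half of `K_p(f)`, so
this half is at most `(2/p') I_p(f)`. Exchanging the variables handles the other half.
-/

section Lebesgue

lemma setLIntegral_Icc_comp_add_right_of_periodic {G : ℝ → ℝ≥0∞} {T : ℝ}
    (hG : Function.Periodic G T) (hT : 0 < T) (a h : ℝ) :
    ∫⁻ x in Icc a (a + T), G (x + h) = ∫⁻ x in Icc a (a + T), G x := by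
  have translate : ∫⁻ x in Ioc a (a + T), G (x + h) = ∫⁻ x in Ioc (a + h) (a + h + T), G x := by
    rw [(measurePreserving_add_right volume h).setLIntegral_comp_emb
      (measurableEmbedding_addRight h), image_add_const_Ioc, add_right_comm a T h]
  have same_period : ∫⁻ x in Ioc (a + h) (a + h + T), G x = ∫⁻ x in Ioc a (a + T), G x :=
    (isAddFundamentalDomain_Ioc hT (a + h)).setLIntegral_eq (isAddFundamentalDomain_Ioc hT a) G
      hG.map_vadd_zmultiples
  simpa only [restrict_Ioc_eq_restrict_Icc] using translate.trans same_period

lemma setLIntegral_mul_setLIntegral_le {α β : Type*} [MeasurableSpace α] [MeasurableSpace β]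
    {μ : Measure α} {ν : Measure β} {s : Set α} {t : Set β} (hs : MeasurableSet s)
    (ht : MeasurableSet t) {F : α → ℝ≥0∞} {G : β → ℝ≥0∞} (hF : AEMeasurable F (μ.restrict s))
    (hG : AEMeasurable G (ν.restrict t)) {H : α → β → ℝ≥0∞} {c : ℝ≥0∞} (hc : c ≠ ∞)
    (hFG : ∀ u ∈ s, ∀ v ∈ t, F u * G v ≤ c * H u v) :
    (∫⁻ u in s, F u ∂μ) * ∫⁻ v in t, G v ∂ν ≤ c * ∫⁻ u in s, ∫⁻ v in t, H u v ∂ν ∂μ := by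
  rw [← lintegral_lintegral_mul hF hG, ← lintegral_const_mul' _ _ hc]
  refine setLIntegral_mono' hs fun u hu ↦ ?_
  rw [← lintegral_const_mul' _ _ hc]
  exact setLIntegral_mono' ht (hFG u hu)

lemma setLIntegral_Ioc_zero_one_rpow {r : ℝ} (hr : -1 < r) :
    ∫⁻ t in Ioc (0 : ℝ) 1, ENNReal.ofReal (t ^ r) = ENNReal.ofReal (1 / (r + 1)) := by
  have hint : IntegrableOn (fun t : ℝ ↦ t ^ r) (Ioc 0 1) :=
    (intervalIntegrable_iff_integrableOn_Ioc_of_le zero_le_one).1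
      (intervalIntegral.intervalIntegrable_rpow' hr)
  have hnonneg : 0 ≤ᵐ[volume.restrict (Ioc (0 : ℝ) 1)] fun t ↦ t ^ r := by
    filter_upwards [ae_restrict_mem measurableSet_Ioc] with t ht using Real.rpow_nonneg ht.1.le r
  rw [← ofReal_integral_eq_lintegral_ofReal hint hnonneg,
    ← intervalIntegral.integral_of_le zero_le_one, integral_rpow (.inl hr), Real.one_rpow,
    Real.zero_rpow (by linarith), sub_zero]

end Lebesgue

section LpNorm2

variable {p : ℝ} {g k : ℝ → ℝ → ℝ}

lemma lpNorm2_zero (hp : 0 < p) : lpNorm2 p (fun _ _ ↦ 0) = 0 := by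
  simp [lpNorm2, Real.zero_rpow hp.ne', hp]

lemma lpNorm2_eq_eLpNorm (hp : 0 < p) (hg : Measurable (Function.uncurry g)) :
    lpNorm2 p g = eLpNorm (Function.uncurry g) (ENNReal.ofReal p)
      ((volume.restrict (Icc 0 1)).prod (volume.restrict (Icc 0 1))) := by
  rw [eLpNorm_eq_lintegral_rpow_enorm_toReal (by simpa using hp) ENNReal.ofReal_ne_top,
    ENNReal.toReal_ofReal hp.le, lintegral_prod _ (by fun_prop)]
  simp only [lpNorm2, Function.uncurry_apply_pair, Real.enorm_eq_ofReal_abs,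
    ENNReal.ofReal_rpow_of_nonneg (abs_nonneg _) hp.le]

lemma lpNorm2_add_le (hp : 1 ≤ p) (hg : Measurable (Function.uncurry g))
    (hk : Measurable (Function.uncurry k)) :
    lpNorm2 p (fun x y ↦ g x y + k x y) ≤ lpNorm2 p g + lpNorm2 p k := by
  have hp0 : 0 < p := one_pos.trans_le hp
  rw [lpNorm2_eq_eLpNorm hp0 hg, lpNorm2_eq_eLpNorm hp0 hk,
    lpNorm2_eq_eLpNorm hp0 (by exact hg.add hk)]
  exact eLpNorm_add_le hg.aestronglyMeasurable hk.aestronglyMeasurable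
    (ENNReal.one_le_ofReal.2 hp)

lemma lpNorm2_swap (hg : Measurable (Function.uncurry g)) :
    lpNorm2 p (Function.swap g) = lpNorm2 p g := by
  have hmeas : Measurable (Function.uncurry fun x y ↦ ENNReal.ofReal (|g x y| ^ p)) := by
    simp only [Function.uncurry_def] at hg ⊢
    fun_prop
  exact congrArg (· ^ (1 / p)) (lintegral_lintegral_swap hmeas.aemeasurable).symm

lemma lpNorm2_comp_add_snd (hg : ∀ x, Function.Periodic (g x) 1) (t : ℝ) :
    lpNorm2 p (fun x y ↦ g x (y + t)) = lpNorm2 p g := by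
  have hslice (x : ℝ) := setLIntegral_Icc_comp_add_right_of_periodic
    ((hg x).comp fun z ↦ ENNReal.ofReal (|z| ^ p)) one_pos 0 t
  simp only [zero_add, Function.comp_apply] at hslice
  simp only [lpNorm2, hslice]

end LpNorm2

section MixedDifference

/-- The mixed difference `Δ(s,t)f`, whose norms enter the definition of `mixedModulus`. -/
def mixedDiff (f : ℝ → ℝ → ℝ) (s t x y : ℝ) : ℝ :=
  f (x + s) (y + t) - f (x + s) y - f x (y + t) + f x y

variable {p : ℝ} {f : ℝ → ℝ → ℝ}

lemma measurable_mixedDiff (hf : Measurable (Function.uncurry f)) (s t : ℝ) :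
    Measurable (Function.uncurry (mixedDiff f s t)) := by
  have shift (a b : ℝ) : Measurable fun z : ℝ × ℝ ↦ f (z.1 + a) (z.2 + b) :=
    hf.comp (f := fun z : ℝ × ℝ ↦ (z.1 + a, z.2 + b)) (by fun_prop)
  have h := (((shift s t).sub (shift s 0)).sub (shift 0 t)).add (shift 0 0)
  simpa only [add_zero] using! h

lemma periodic_mixedDiff (hf : ∀ x, Function.Periodic (f x) 1) (s t x : ℝ) :
    Function.Periodic (mixedDiff f s t x) 1 := fun y ↦ by
  simp only [mixedDiff, add_right_comm y 1 t, hf x _, hf (x + s) _]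

lemma mixedDiff_zero_right (f : ℝ → ℝ → ℝ) (s : ℝ) : mixedDiff f s 0 = fun _ _ ↦ 0 := by
  funext x y
  simp [mixedDiff]

lemma mixedDiff_swap (f : ℝ → ℝ → ℝ) (s t : ℝ) :
    mixedDiff (Function.swap f) s t = Function.swap (mixedDiff f t s) := by
  funext x y
  simp only [mixedDiff, Function.swap]
  ring

lemma mixedDiff_add_right (f : ℝ → ℝ → ℝ) (s t₁ t₂ : ℝ) :
    mixedDiff f s (t₁ + t₂) = fun x y ↦ mixedDiff f s t₁ x (y + t₂) + mixedDiff f s t₂ x y := by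
  funext x y
  simp only [mixedDiff, add_comm t₁ t₂, ← add_assoc]
  ring

lemma lpNorm2_mixedDiff_add_right_le (hp : 1 ≤ p) (hf : Measurable (Function.uncurry f))
    (hper : ∀ x, Function.Periodic (f x) 1) (s t₁ t₂ : ℝ) :
    lpNorm2 p (mixedDiff f s (t₁ + t₂)) ≤
      lpNorm2 p (mixedDiff f s t₁) + lpNorm2 p (mixedDiff f s t₂) := by
  have hshift : Measurable (Function.uncurry fun x y ↦ mixedDiff f s t₁ x (y + t₂)) :=
    (measurable_mixedDiff hf s t₁).comp (f := fun z : ℝ × ℝ ↦ (z.1, z.2 + t₂)) (by fun_prop)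
  rw [mixedDiff_add_right, ← lpNorm2_comp_add_snd (periodic_mixedDiff hper s t₁) t₂]
  exact lpNorm2_add_le hp hshift (measurable_mixedDiff hf s t₂)

lemma lpNorm2_mixedDiff_nat_mul_right_le (hp : 1 ≤ p) (hf : Measurable (Function.uncurry f))
    (hper : ∀ x, Function.Periodic (f x) 1) (s t : ℝ) (n : ℕ) :
    lpNorm2 p (mixedDiff f s (n * t)) ≤ n * lpNorm2 p (mixedDiff f s t) := by
  induction n with
  | zero => simp [mixedDiff_zero_right, lpNorm2_zero (one_pos.trans_le hp)]
  | succ n ih =>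
    push_cast
    rw [add_one_mul, add_one_mul]
    exact (lpNorm2_mixedDiff_add_right_le hp hf hper s (n * t) t).trans (by gcongr)

end MixedDifference

section MixedModulus

variable {p : ℝ} {f : ℝ → ℝ → ℝ}

lemma mixedModulus_le_iff {u v : ℝ} {c : ℝ≥0∞} :
    mixedModulus p f u v ≤ c ↔
      ∀ s ∈ Icc 0 u, ∀ t ∈ Icc 0 v, lpNorm2 p (mixedDiff f s t) ≤ c := by
  simp only [mixedModulus, iSup_le_iff]
  rfl

lemma lpNorm2_mixedDiff_le_mixedModulus {s t u v : ℝ} (hs : s ∈ Icc 0 u) (ht : t ∈ Icc 0 v) :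
    lpNorm2 p (mixedDiff f s t) ≤ mixedModulus p f u v :=
  mixedModulus_le_iff.1 le_rfl s hs t ht

lemma mixedModulus_mono {u u' v v' : ℝ} (hu : u ≤ u') (hv : v ≤ v') :
    mixedModulus p f u v ≤ mixedModulus p f u' v' :=
  mixedModulus_le_iff.2 fun _ hs _ ht ↦ lpNorm2_mixedDiff_le_mixedModulus
    (Icc_subset_Icc_right hu hs) (Icc_subset_Icc_right hv ht)

lemma mixedModulus_swap (hf : Measurable (Function.uncurry f)) (u v : ℝ) :
    mixedModulus p (Function.swap f) u v = mixedModulus p f v u := by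
  refine eq_of_forall_ge_iff fun c ↦ ?_
  simp only [mixedModulus_le_iff, mixedDiff_swap, lpNorm2_swap (measurable_mixedDiff hf _ _)]
  exact ⟨fun h s hs t ht ↦ h t ht s hs, fun h s hs t ht ↦ h t ht s hs⟩

lemma mixedModulus_nat_mul_right_le (hp : 1 ≤ p) (hf : Measurable (Function.uncurry f))
    (hper : ∀ x, Function.Periodic (f x) 1) (u v : ℝ) {n : ℕ} (hn : 0 < n) :
    mixedModulus p f u (n * v) ≤ n * mixedModulus p f u v := by
  have hn' : (0 : ℝ) < n := Nat.cast_pos.2 hn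
  refine mixedModulus_le_iff.2 fun s hs t ht ↦ ?_
  have hdiv : t / n ∈ Icc 0 v := ⟨div_nonneg ht.1 hn'.le, (div_le_iff₀' hn').2 ht.2⟩
  calc lpNorm2 p (mixedDiff f s t)
      = lpNorm2 p (mixedDiff f s (n * (t / n))) := by rw [mul_div_cancel₀ t hn'.ne']
    _ ≤ n * lpNorm2 p (mixedDiff f s (t / n)) :=
        lpNorm2_mixedDiff_nat_mul_right_le hp hf hper s (t / n) n
    _ ≤ n * mixedModulus p f u v := by
        gcongr
        exact lpNorm2_mixedDiff_le_mixedModulus hs hdiv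

lemma ofReal_mul_mixedModulus_right_le (hp : 1 ≤ p) (hf : Measurable (Function.uncurry f))
    (hper : ∀ x, Function.Periodic (f x) 1) (u : ℝ) {v V : ℝ} (hv : 0 < v) (hvV : v ≤ V) :
    ENNReal.ofReal v * mixedModulus p f u V ≤ ENNReal.ofReal (2 * V) * mixedModulus p f u v := by
  have hratio : 1 ≤ V / v := (one_le_div hv).2 hvV
  set n := ⌈V / v⌉₊
  have hn : 0 < n := Nat.ceil_pos.2 (one_pos.trans_le hratio)
  have V_le : V ≤ n * v := (div_le_iff₀ hv).1 (Nat.le_ceil _)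
  have le_two_mul : v * n ≤ 2 * V :=
    calc v * n ≤ v * (2 * (V / v)) := by
          gcongr
          exact Nat.ceil_le_two_mul (le_trans (by norm_num) hratio)
      _ = 2 * V := by field_simp
  calc ENNReal.ofReal v * mixedModulus p f u V
      ≤ ENNReal.ofReal v * (n * mixedModulus p f u v) := by
        gcongr
        exact (mixedModulus_mono le_rfl V_le).trans
          (mixedModulus_nat_mul_right_le hp hf hper u v hn)
    _ = ENNReal.ofReal (v * n) * mixedModulus p f u v := by
        rw [ENNReal.ofReal_mul hv.le, ENNReal.ofReal_natCast, mul_assoc]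
    _ ≤ ENNReal.ofReal (2 * V) * mixedModulus p f u v := by gcongr

lemma ofReal_mul_mixedModulus_left_le (hp : 1 ≤ p) (hf : Measurable (Function.uncurry f))
    (hper : ∀ y, Function.Periodic (fun x ↦ f x y) 1) (v : ℝ) {u U : ℝ} (hu : 0 < u)
    (huU : u ≤ U) :
    ENNReal.ofReal u * mixedModulus p f U v ≤ ENNReal.ofReal (2 * U) * mixedModulus p f u v := by
  simpa only [mixedModulus_swap hf] using
    ofReal_mul_mixedModulus_right_le hp (f := Function.swap f) (hf.comp measurable_swap) hper v
      hu huU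

end MixedModulus

section Weight

/-- The weight `t^{-1/p} / t` of the integrals `Kp` and, in each variable, `Ip`. -/
noncomputable def besovWeight (p t : ℝ) : ℝ≥0∞ :=
  ENNReal.ofReal (t ^ (-(1 / p)) / t)

lemma measurable_besovWeight (p : ℝ) : Measurable (besovWeight p) := by
  unfold besovWeight
  fun_prop

lemma besovWeight_mul_besovWeight (p : ℝ) {u v : ℝ} (hu : 0 < u) (hv : 0 < v) :
    besovWeight p u * besovWeight p v =
      ENNReal.ofReal ((u * v) ^ (-(1 / p)) / (u * v)) := by
  rw [besovWeight, besovWeight, ← ENNReal.ofReal_mul (by positivity), div_mul_div_comm,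
    Real.mul_rpow hu.le hv.le]

lemma setLIntegral_besovWeight_mul_ofReal {p : ℝ} (hp : 1 < p) :
    ∫⁻ t in Ioc (0 : ℝ) 1, besovWeight p t * ENNReal.ofReal t = ENNReal.ofReal (p / (p - 1)) := by
  have hp0 : 0 < p := one_pos.trans hp
  have cancel (t : ℝ) (ht : t ∈ Ioc (0 : ℝ) 1) :
      besovWeight p t * ENNReal.ofReal t = ENNReal.ofReal (t ^ (-(1 / p))) := by
    rw [besovWeight, ← ENNReal.ofReal_mul' ht.1.le, div_mul_cancel₀ _ ht.1.ne']
  have hexp : -1 < -(1 / p) := neg_lt_neg ((div_lt_one hp0).2 hp)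
  have hconj : 1 / (-(1 / p) + 1) = p / (p - 1) := by
    rw [neg_add_eq_sub, one_sub_div hp0.ne', one_div_div]
  rw [setLIntegral_congr_fun measurableSet_Ioc cancel, setLIntegral_Ioc_zero_one_rpow hexp, hconj]

end Weight

section Main

variable {p : ℝ} {f : ℝ → ℝ → ℝ}

lemma measurable_besovWeight_mul_mixedModulus_left (p : ℝ) (f : ℝ → ℝ → ℝ) (v : ℝ) :
    Measurable fun t ↦ besovWeight p t * mixedModulus p f t v :=
  have hmono : Monotone fun t ↦ mixedModulus p f t v := fun _ _ h ↦ mixedModulus_mono h le_rfl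
  (measurable_besovWeight p).mul hmono.measurable

lemma measurable_besovWeight_mul_mixedModulus_right (p : ℝ) (f : ℝ → ℝ → ℝ) (u : ℝ) :
    Measurable fun t ↦ besovWeight p t * mixedModulus p f u t :=
  have hmono : Monotone fun t ↦ mixedModulus p f u t := fun _ _ h ↦ mixedModulus_mono le_rfl h
  (measurable_besovWeight p).mul hmono.measurable

lemma Kp_eq_add (p : ℝ) (f : ℝ → ℝ → ℝ) :
    Kp p f = (∫⁻ t in Ioc (0 : ℝ) 1, besovWeight p t * mixedModulus p f t 1) +
      ∫⁻ t in Ioc (0 : ℝ) 1, besovWeight p t * mixedModulus p f 1 t := by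
  rw [← lintegral_add_left (measurable_besovWeight_mul_mixedModulus_left p f 1)]
  simp only [Kp, besovWeight, mul_add]

lemma setLIntegral_mixedModulus_left_mul_le (hp : 1 < p) (hf : Measurable (Function.uncurry f))
    (hper : ∀ x, Function.Periodic (f x) 1) :
    (∫⁻ t in Ioc (0 : ℝ) 1, besovWeight p t * mixedModulus p f t 1) *
      ENNReal.ofReal (p / (p - 1)) ≤ 2 * Ip p f := by
  rw [← setLIntegral_besovWeight_mul_ofReal hp]
  refine setLIntegral_mul_setLIntegral_le measurableSet_Ioc measurableSet_Ioc
    (measurable_besovWeight_mul_mixedModulus_left p f 1).aemeasurable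
    ((measurable_besovWeight p).mul ENNReal.measurable_ofReal).aemeasurable ENNReal.ofNat_ne_top
    fun u hu v hv ↦ ?_
  have hscale : ENNReal.ofReal v * mixedModulus p f u 1 ≤ 2 * mixedModulus p f u v := by
    simpa using ofReal_mul_mixedModulus_right_le hp.le hf hper u hv.1 hv.2
  rw [← besovWeight_mul_besovWeight p hu.1 hv.1]
  calc besovWeight p u * mixedModulus p f u 1 * (besovWeight p v * ENNReal.ofReal v)
      = besovWeight p u * besovWeight p v * (ENNReal.ofReal v * mixedModulus p f u 1) := by ring
    _ ≤ besovWeight p u * besovWeight p v * (2 * mixedModulus p f u v) := by gcongr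
    _ = 2 * (besovWeight p u * besovWeight p v * mixedModulus p f u v) := by ring

lemma setLIntegral_mixedModulus_right_mul_le (hp : 1 < p) (hf : Measurable (Function.uncurry f))
    (hper : ∀ y, Function.Periodic (fun x ↦ f x y) 1) :
    (∫⁻ t in Ioc (0 : ℝ) 1, besovWeight p t * mixedModulus p f 1 t) *
      ENNReal.ofReal (p / (p - 1)) ≤ 2 * Ip p f := by
  rw [← setLIntegral_besovWeight_mul_ofReal hp, mul_comm]
  refine setLIntegral_mul_setLIntegral_le measurableSet_Ioc measurableSet_Ioc
    ((measurable_besovWeight p).mul ENNReal.measurable_ofReal).aemeasurable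
    (measurable_besovWeight_mul_mixedModulus_right p f 1).aemeasurable ENNReal.ofNat_ne_top
    fun u hu v hv ↦ ?_
  have hscale : ENNReal.ofReal u * mixedModulus p f 1 v ≤ 2 * mixedModulus p f u v := by
    simpa using ofReal_mul_mixedModulus_left_le hp.le hf hper v hu.1 hu.2
  rw [← besovWeight_mul_besovWeight p hu.1 hv.1]
  calc besovWeight p u * ENNReal.ofReal u * (besovWeight p v * mixedModulus p f 1 v)
      = besovWeight p u * besovWeight p v * (ENNReal.ofReal u * mixedModulus p f 1 v) := by ring
    _ ≤ besovWeight p u * besovWeight p v * (2 * mixedModulus p f u v) := by gcongr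
    _ = 2 * (besovWeight p u * besovWeight p v * mixedModulus p f u v) := by ring

end Main

theorem statement4_general (p : ℝ) (hp : 1 < p) (f : ℝ → ℝ → ℝ)
    (hf : Measurable (Function.uncurry f)) (hper : BiPeriodic f) :
    Kp p f ≤ ENNReal.ofReal (4 / (p / (p - 1))) * Ip p f := by
  have hconj : 0 < p / (p - 1) := div_pos (one_pos.trans hp) (sub_pos.2 hp)
  have hmul : Kp p f * ENNReal.ofReal (p / (p - 1)) ≤ 4 * Ip p f :=
    calc Kp p f * ENNReal.ofReal (p / (p - 1))
        ≤ 2 * Ip p f + 2 * Ip p f := by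
          rw [Kp_eq_add, add_mul]
          exact add_le_add (setLIntegral_mixedModulus_left_mul_le hp hf hper.2)
            (setLIntegral_mixedModulus_right_mul_le hp hf fun y x ↦ hper.1 x y)
      _ = 4 * Ip p f := by ring
  rw [ENNReal.ofReal_div_of_pos hconj, ENNReal.ofReal_ofNat, ← ENNReal.mul_div_right_comm,
    ENNReal.le_div_iff_mul_le (.inl (ENNReal.ofReal_pos.2 hconj).ne') (.inl ENNReal.ofReal_ne_top)]
  exact hmul

/-- For `1 < p < ∞` and `f ∈ L^p([0,1]²)`:
`K_p(f) ≤ (4/p') I_p(f)` (in `[0,∞]`), where `p' = p/(p-1)`. -/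
theorem statement4 (p : ℝ) (hp : 1 < p) (f : ℝ → ℝ → ℝ) (hf : MemLp2 p f) :
    Kp p f ≤ ENNReal.ofReal (4 / (p / (p - 1))) * Ip p f :=
  statement4_general p hp f hf.1 hf.2.1
end

section
/- Let 1 ≤ p < ∞, n ∈ ℕ, and t_n(x) = sin(2πnx). Then n^{1/p} ≤ v_p(t_n) ≤ 2π·n^{1/p}, and ω(t_n;δ)_p ≤ 2π·min(1, nδ) for all 0 < δ ≤ 1. -/
open MeasureTheory Filter Set
open scoped ENNReal

/-!
The lower bound samples `sin (2πnx)` at its `2n` extrema in one period, where it alternates between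
`1` and `-1`. The upper bounds hold for every `K`-Lipschitz function `g` of oscillation at most `D`:
each increment over `[a, b]` satisfies `|g b - g a| ^ p ≤ D ^ (p - 1) * K * (b - a)`, which
telescopes over a partition, and `|g (x + h) - g x| ≤ min D (K * h)` pointwise.
-/

theorem ofReal_mul_rpow_le_vp {p c : ℝ} (hp : 0 < p) (hc : 0 ≤ c) {g : ℝ → ℝ} {m : ℕ} {x : ℕ → ℝ}
    (hx : ∀ i < m, x i < x (i + 1)) (hm : x m = x 0 + 1)
    (hg : ∀ i < m, c ≤ |g (x (i + 1)) - g (x i)|) :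
    ENNReal.ofReal (c * (m : ℝ) ^ (1 / p)) ≤ vp p g := by
  have sum_ge : c ^ p * m ≤ ∑ k ∈ Finset.range m, |g (x (k + 1)) - g (x k)| ^ p := by
    have := Finset.card_nsmul_le_sum (Finset.range m) _ (c ^ p) fun k hk =>
      Real.rpow_le_rpow hc (hg k (Finset.mem_range.1 hk)) hp.le
    rwa [Finset.card_range, nsmul_eq_mul, mul_comm] at this
  refine le_iSup_of_le m (le_iSup_of_le x (le_iSup_of_le hx (le_iSup_of_le hm ?_)))
  apply ENNReal.ofReal_le_ofReal
  calc c * (m : ℝ) ^ (1 / p) = (c ^ p * m) ^ (1 / p) := by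
        rw [Real.mul_rpow (by positivity) (by positivity), one_div,
          Real.rpow_rpow_inv hc hp.ne']
    _ ≤ _ := Real.rpow_le_rpow (by positivity) sum_ge (by positivity)

theorem rpow_le_rpow_sub_one_mul {a D p : ℝ} (hp : 1 ≤ p) (ha : 0 ≤ a) (haD : a ≤ D) :
    a ^ p ≤ D ^ (p - 1) * a :=
  calc a ^ p = a ^ (p - 1) * a := by
        rw [← Real.rpow_add_one' ha (by linarith), sub_add_cancel]
    _ ≤ D ^ (p - 1) * a := by gcongr

theorem lpNorm1_le_of_abs_le {p C : ℝ} (hp : 0 < p) {g : ℝ → ℝ}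
    (hC : ∀ x ∈ Icc (0 : ℝ) 1, |g x| ≤ C) :
    lpNorm1 p g ≤ ENNReal.ofReal C := by
  have hC₀ : 0 ≤ C := (abs_nonneg _).trans (hC 0 (left_mem_Icc.2 zero_le_one))
  have lintegral_le :
      ∫⁻ x in Icc (0 : ℝ) 1, ENNReal.ofReal (|g x| ^ p) ≤ ENNReal.ofReal (C ^ p) :=
    calc _ ≤ ∫⁻ _ in Icc (0 : ℝ) 1, ENNReal.ofReal (C ^ p) :=
          setLIntegral_mono measurable_const fun x hx => by gcongr; exact hC x hx
      _ = ENNReal.ofReal (C ^ p) := by simp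
  calc lpNorm1 p g ≤ ENNReal.ofReal (C ^ p) ^ (1 / p) :=
        ENNReal.rpow_le_rpow lintegral_le (by positivity)
    _ = ENNReal.ofReal C := by
        rw [← ENNReal.ofReal_rpow_of_nonneg hC₀ hp.le, one_div, ENNReal.rpow_rpow_inv hp.ne']

section LipschitzWith

variable {p D : ℝ} {K : NNReal} {g : ℝ → ℝ}

theorem vp_le_of_lipschitzWith (hp : 1 ≤ p) (hK : LipschitzWith K g)
    (hD : ∀ x y, |g x - g y| ≤ D) :
    vp p g ≤ ENNReal.ofReal ((D ^ (p - 1) * K) ^ (1 / p)) := by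
  refine iSup_le fun m => iSup_le fun x => iSup_le fun hx => iSup_le fun hm => ?_
  have hD₀ : 0 ≤ D := (abs_nonneg _).trans (hD 0 0)
  have increment_le (k) (hk : k ∈ Finset.range m) :
      |g (x (k + 1)) - g (x k)| ^ p ≤ D ^ (p - 1) * K * (x (k + 1) - x k) := by
    have lipschitz_le : |g (x (k + 1)) - g (x k)| ≤ K * (x (k + 1) - x k) := by
      simpa only [Real.dist_eq, abs_of_pos (sub_pos.2 (hx k (Finset.mem_range.1 hk)))]
        using hK.dist_le_mul (x (k + 1)) (x k)
    calc _ ≤ D ^ (p - 1) * |g (x (k + 1)) - g (x k)| :=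
          rpow_le_rpow_sub_one_mul hp (abs_nonneg _) (hD _ _)
      _ ≤ D ^ (p - 1) * (K * (x (k + 1) - x k)) := by gcongr
      _ = _ := (mul_assoc _ _ _).symm
  have sum_le : ∑ k ∈ Finset.range m, |g (x (k + 1)) - g (x k)| ^ p ≤ D ^ (p - 1) * K :=
    calc _ ≤ ∑ k ∈ Finset.range m, D ^ (p - 1) * K * (x (k + 1) - x k) :=
          Finset.sum_le_sum increment_le
      _ = D ^ (p - 1) * K := by
          rw [← Finset.mul_sum, Finset.sum_range_sub, hm, add_sub_cancel_left, mul_one]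
  gcongr

theorem modulus1_le_of_lipschitzWith (hp : 0 < p) (hK : LipschitzWith K g)
    (hD : ∀ x y, |g x - g y| ≤ D) (δ : ℝ) :
    modulus1 p g δ ≤ ENNReal.ofReal (min D (K * δ)) := by
  refine iSup₂_le fun h hh => lpNorm1_le_of_abs_le hp fun x _ => le_min (hD _ _) ?_
  calc |g (x + h) - g x| ≤ K * |x + h - x| := hK.dist_le_mul (x + h) x
    _ = K * h := by rw [add_sub_cancel_left, abs_of_nonneg hh.1]
    _ ≤ K * δ := by gcongr; exact hh.2

end LipschitzWith

theorem lipschitzWith_sin_mul (a : ℝ) : LipschitzWith ‖a‖₊ fun x => Real.sin (a * x) := by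
  simpa only [one_mul] using! Real.lipschitzWith_sin.comp (lipschitzWith_smul a)

theorem coe_nnnorm_two_pi_mul (a : ℝ) : (‖2 * Real.pi * a‖₊ : ℝ) = 2 * Real.pi * |a| := by
  rw [coe_nnnorm, Real.norm_eq_abs, abs_mul, abs_of_pos Real.two_pi_pos]

theorem abs_sin_sub_sin_le_two_pi (x y : ℝ) : |Real.sin x - Real.sin y| ≤ 2 * Real.pi :=
  calc |Real.sin x - Real.sin y| ≤ |Real.sin x| + |Real.sin y| := abs_sub _ _
    _ ≤ 2 * Real.pi := by
        linarith [Real.abs_sin_le_one x, Real.abs_sin_le_one y, Real.pi_gt_three]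

theorem vp_sin_le {p : ℝ} (hp : 1 ≤ p) (a : ℝ) :
    vp p (fun x => Real.sin (2 * Real.pi * a * x)) ≤
      ENNReal.ofReal (2 * Real.pi * |a| ^ (1 / p)) := by
  have root_eq : ((2 * Real.pi) ^ (p - 1) * (2 * Real.pi * |a|)) ^ (1 / p) =
      2 * Real.pi * |a| ^ (1 / p) := by
    rw [← mul_assoc, ← Real.rpow_add_one Real.two_pi_pos.ne', sub_add_cancel,
      Real.mul_rpow (by positivity) (abs_nonneg a), one_div,
      Real.rpow_rpow_inv Real.two_pi_pos.le (by linarith)]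
  simpa only [coe_nnnorm_two_pi_mul, root_eq] using
    vp_le_of_lipschitzWith hp (lipschitzWith_sin_mul (2 * Real.pi * a))
      fun _ _ => abs_sin_sub_sin_le_two_pi _ _

theorem modulus1_sin_le {p : ℝ} (hp : 0 < p) (a δ : ℝ) :
    modulus1 p (fun x => Real.sin (2 * Real.pi * a * x)) δ ≤
      ENNReal.ofReal (2 * Real.pi * min 1 (|a| * δ)) := by
  rw [mul_min_of_nonneg _ _ Real.two_pi_pos.le, mul_one, ← mul_assoc]
  simpa only [coe_nnnorm_two_pi_mul] using
    modulus1_le_of_lipschitzWith hp (lipschitzWith_sin_mul (2 * Real.pi * a))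
      (fun _ _ => abs_sin_sub_sin_le_two_pi _ _) δ

theorem sin_two_pi_mul_odd_quarter_period {a : ℝ} (ha : a ≠ 0) (k : ℕ) :
    Real.sin (2 * Real.pi * a * ((2 * k + 1) / (4 * a))) = (-1) ^ k := by
  rw [← Real.cos_nat_mul_pi, ← Real.sin_add_pi_div_two]
  congr 1
  field_simp
  ring

theorem abs_neg_one_pow_succ_sub (k : ℕ) : |(-1 : ℝ) ^ (k + 1) - (-1) ^ k| = 2 := by
  rw [show (-1 : ℝ) ^ (k + 1) - (-1) ^ k = (-1) ^ k * (-2) by ring, abs_mul, abs_neg_one_pow]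
  norm_num

theorem ofReal_le_vp_sin {p : ℝ} (hp : 0 < p) {n : ℕ} (hn : n ≠ 0) :
    ENNReal.ofReal (2 * (2 * n : ℝ) ^ (1 / p)) ≤ vp p fun x => Real.sin (2 * Real.pi * n * x) := by
  have hn₀ : (n : ℝ) ≠ 0 := Nat.cast_ne_zero.2 hn
  let x (k : ℕ) : ℝ := (2 * k + 1) / (4 * n)
  have x_lt_succ (k) (_ : k < 2 * n) : x k < x (k + 1) := by
    simp only [x]
    gcongr
    exact k.lt_succ_self
  have x_last : x (2 * n) = x 0 + 1 := by
    simp only [x]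
    push_cast
    field_simp
    ring
  have two_le_increment (k) (_ : k < 2 * n) :
      2 ≤ |Real.sin (2 * Real.pi * n * x (k + 1)) - Real.sin (2 * Real.pi * n * x k)| := by
    simp only [x]
    rw [sin_two_pi_mul_odd_quarter_period hn₀, sin_two_pi_mul_odd_quarter_period hn₀,
      abs_neg_one_pow_succ_sub]
  exact_mod_cast ofReal_mul_rpow_le_vp hp zero_le_two x_lt_succ x_last two_le_increment

/-- For `t_n(x) = sin(2πnx)` and `1 ≤ p < ∞`:
`n^{1/p} ≤ v_p(t_n) ≤ 2π n^{1/p}`, and `ω(t_n;δ)_p ≤ 2π min(1, nδ)` for `0 < δ ≤ 1`. -/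
theorem statement9 (p : ℝ) (hp : 1 ≤ p) (n : ℕ) (hn : 1 ≤ n) :
    ENNReal.ofReal ((n : ℝ) ^ (1 / p))
        ≤ vp p (fun x => Real.sin (2 * Real.pi * n * x)) ∧
    vp p (fun x => Real.sin (2 * Real.pi * n * x))
        ≤ ENNReal.ofReal (2 * Real.pi * (n : ℝ) ^ (1 / p)) ∧
    ∀ δ : ℝ, 0 < δ → δ ≤ 1 →
      modulus1 p (fun x => Real.sin (2 * Real.pi * n * x)) δ
        ≤ ENNReal.ofReal (2 * Real.pi * min 1 ((n : ℝ) * δ)) := by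
  have hp₀ : 0 < p := by linarith
  have lower : (n : ℝ) ^ (1 / p) ≤ 2 * (2 * n : ℝ) ^ (1 / p) :=
    calc (n : ℝ) ^ (1 / p) ≤ (2 * n : ℝ) ^ (1 / p) := by gcongr; linarith
      _ ≤ 2 * (2 * n : ℝ) ^ (1 / p) := le_mul_of_one_le_left (by positivity) one_le_two
  refine ⟨(ENNReal.ofReal_le_ofReal lower).trans (ofReal_le_vp_sin hp₀ (by lia)), ?_, ?_⟩
  · simpa only [Nat.abs_cast] using vp_sin_le hp (n : ℝ)
  · intro δ _ _
    simpa only [Nat.abs_cast] using modulus1_sin_le hp₀ (n : ℝ) δ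
end

section
/- Let α, β : (2,∞) → (0,∞) satisfy α_p ≤ 1/p and β_p ≤ 1/p² for all p > 2, and suppose there is a constant A > 0 such that v_p^{(2)}(f) ≤ A[ω(f;1,1)_p + α_p·K_p(f) + β_p·I_p(f)] holds for every p > 2 and every continuous function f ∈ L^p([0,1]²) with I_p(f) < ∞. Then liminf_{p→∞} p·α_p > 0 and liminf_{p→∞} p²·β_p > 0. -/
open MeasureTheory Filter Set
open scoped ENNReal

/-!
On a tensor product `f(x, y) = g(x) h(y)` the mixed modulus is `ω(g;u)_p ω(h;v)_p`. Writing `L(g)`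
for the integral `∫₀¹ t^{-1/p} ω(g;t)_p dt/t`, we get `K_p(f) = L(g) ω(h;1)_p + ω(g;1)_p L(h)` and
`I_p(f) = L(g) L(h)`. A tent of height `1` and width `ε^{4p}` has modulus `O(ε⁴)` and
`L = O(p ε⁻³)`, while a tent of fixed width has modulus and `L` both `O(1)`; the tensor product of
two such tents has `v_p⁽²⁾ ≥ 1`. A narrow tent times a wide one turns the assumed inequality into
`1 ≤ A (O(ε) + O(ε⁻³) p α_p)` for large `p`, and two narrow ones turn it into
`1 ≤ A (O(ε) + O(ε⁻⁶) p² β_p)`. In both cases it remains to fix `ε` small compared with `1 / A`.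
-/

open scoped NNReal

/-! ### Tensor products -/

section Tensor

variable {p : ℝ} {g h : ℝ → ℝ}

/-- The one-variable functional `∫₀¹ t^{-1/p} ω(g;t)_p dt/t`. On tensor products `g(x) h(y)` the
functionals `K_p` and `I_p` are expressed through it. -/
noncomputable def besovIntegral (p : ℝ) (g : ℝ → ℝ) : ℝ≥0∞ :=
  ∫⁻ t in Ioc (0 : ℝ) 1, ENNReal.ofReal (t ^ (-(1 / p)) / t) * modulus1 p g t

lemma modulus1_mono (p : ℝ) (g : ℝ → ℝ) : Monotone (modulus1 p g) := fun _ _ hst =>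
  biSup_mono fun _ hs => Icc_subset_Icc_right hst hs

lemma lpNorm2_mul (hp : 0 < p) (hg : Measurable g) (hh : Measurable h) :
    lpNorm2 p (fun x y => g x * h y) = lpNorm1 p g * lpNorm1 p h := by
  have ofReal_abs_mul_rpow (x y : ℝ) : ENNReal.ofReal (|g x * h y| ^ p)
      = ENNReal.ofReal (|g x| ^ p) * ENNReal.ofReal (|h y| ^ p) := by
    rw [abs_mul, Real.mul_rpow (abs_nonneg _) (abs_nonneg _), ENNReal.ofReal_mul (by positivity)]
  simp_rw [lpNorm2, lpNorm1, ofReal_abs_mul_rpow]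
  rw [← ENNReal.mul_rpow_of_nonneg _ _ (by positivity),
    ← lintegral_mul_const _ (by fun_prop)]
  congr! 3 with x
  exact lintegral_const_mul _ (by fun_prop)

lemma mixedModulus_mul (hp : 0 < p) (hg : Measurable g) (hh : Measurable h) (u v : ℝ) :
    mixedModulus p (fun x y => g x * h y) u v = modulus1 p g u * modulus1 p h v := by
  have lpNorm2_mixedDiff (s t : ℝ) :
      lpNorm2 p (fun x y => g (x + s) * h (y + t) - g (x + s) * h y - g x * h (y + t) + g x * h y)
        = lpNorm1 p (fun x => g (x + s) - g x) * lpNorm1 p (fun y => h (y + t) - h y) := by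
    rw [← lpNorm2_mul hp (by fun_prop) (by fun_prop)]
    congr! 3 with x y
    ring
  simp_rw [mixedModulus, modulus1, lpNorm2_mixedDiff, ENNReal.iSup_mul, ENNReal.mul_iSup]

lemma Kp_mul (hp : 0 < p) (hg : Measurable g) (hh : Measurable h) :
    Kp p (fun x y => g x * h y)
      = besovIntegral p g * modulus1 p h 1 + modulus1 p g 1 * besovIntegral p h := by
  have measurable_modulus1_left := (modulus1_mono p g).measurable
  have measurable_modulus1_right := (modulus1_mono p h).measurable
  simp_rw [Kp, besovIntegral, mixedModulus_mul hp hg hh, mul_add]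
  rw [lintegral_add_left (by fun_prop), ← lintegral_mul_const _ (by fun_prop),
    ← lintegral_const_mul _ (by fun_prop)]
  congr! 3 with t t
  · ring
  · ring

lemma Ip_mul (hp : 0 < p) (hg : Measurable g) (hh : Measurable h) :
    Ip p (fun x y => g x * h y) = besovIntegral p g * besovIntegral p h := by
  have measurable_modulus1_left := (modulus1_mono p g).measurable
  have measurable_modulus1_right := (modulus1_mono p h).measurable
  rw [Ip, besovIntegral, ← lintegral_mul_const _ (by fun_prop)]
  refine setLIntegral_congr_fun measurableSet_Ioc fun u hu => ?_
  simp only [besovIntegral]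
  rw [← lintegral_const_mul _ (by fun_prop)]
  refine setLIntegral_congr_fun measurableSet_Ioc fun v hv => ?_
  have hu0 : 0 < u := hu.1
  have hv0 : 0 < v := hv.1
  have weight_mul :
      (u * v) ^ (-(1 / p)) / (u * v) = u ^ (-(1 / p)) / u * (v ^ (-(1 / p)) / v) := by
    rw [Real.mul_rpow hu0.le hv0.le, mul_div_mul_comm]
  simp only [mixedModulus_mul hp hg hh, weight_mul]
  rw [ENNReal.ofReal_mul (by positivity)]
  ring

lemma vp_mul_vp_le_vp2 (p : ℝ) (g h : ℝ → ℝ) :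
    vp p g * vp p h ≤ vp2 p (fun x y => g x * h y) := by
  simp_rw [vp, ENNReal.iSup_mul, ENNReal.mul_iSup]
  refine iSup₂_le fun m x => iSup₂_le fun hx hxm => iSup₂_le fun n y => iSup₂_le fun hy hyn => ?_
  refine le_trans (le_of_eq ?_) (le_iSup₂_of_le m n <| le_iSup₂_of_le x y <|
    le_iSup₂_of_le hx hxm <| le_iSup₂_of_le hy hyn le_rfl)
  rw [← ENNReal.ofReal_mul (by positivity), ← Real.mul_rpow (by positivity) (by positivity),
    Finset.sum_mul_sum]
  congr! 4 with i _ j _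
  rw [← Real.mul_rpow (abs_nonneg _) (abs_nonneg _), ← abs_mul]
  congr 2
  ring

end Tensor

lemma ofReal_abs_sub_le_vp {p a b : ℝ} (hp : 0 < p) (g : ℝ → ℝ) (hab : a < b) (hb : b < a + 1) :
    ENNReal.ofReal |g b - g a| ≤ vp p g := by
  let x : ℕ → ℝ
    | 0 => a
    | 1 => b
    | _ => a + 1
  have hx : ∀ i < 2, x i < x (i + 1) := by
    intro i hi
    interval_cases i
    exacts [hab, hb]
  refine le_trans (ENNReal.ofReal_le_ofReal ?_)
    (le_iSup₂_of_le 2 x <| le_iSup₂_of_le hx rfl le_rfl)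
  calc |g b - g a| = (|g b - g a| ^ p) ^ (1 / p) := by
        rw [one_div, Real.rpow_rpow_inv (abs_nonneg _) hp.ne']
    _ ≤ (∑ k ∈ Finset.range 2, |g (x (k + 1)) - g (x k)| ^ p) ^ (1 / p) := by
        gcongr
        exact Finset.single_le_sum (f := fun k => |g (x (k + 1)) - g (x k)| ^ p)
          (fun _ _ => by positivity) (Finset.mem_range.2 two_pos)

lemma besovIntegral_le_of_modulus1_le {p θ a : ℝ} {g : ℝ → ℝ} (ha : 0 ≤ a) (hθ : 1 / p < θ)
    (hg : ∀ t ∈ Ioc (0 : ℝ) 1, modulus1 p g t ≤ ENNReal.ofReal (a * t ^ θ)) :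
    besovIntegral p g ≤ ENNReal.ofReal (a / (θ - 1 / p)) := by
  have exponent_gt : -1 < θ - 1 / p - 1 := by linarith
  have integrableOn_rpow : IntegrableOn (fun t : ℝ => t ^ (θ - 1 / p - 1)) (Ioc 0 1) :=
    (intervalIntegrable_iff_integrableOn_Ioc_of_le zero_le_one).1
      (intervalIntegral.intervalIntegrable_rpow' exponent_gt)
  calc besovIntegral p g
      ≤ ∫⁻ t in Ioc (0 : ℝ) 1, ENNReal.ofReal (a * t ^ (θ - 1 / p - 1)) := by
        refine setLIntegral_mono' measurableSet_Ioc fun t ht => ?_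
        have ht0 : 0 < t := ht.1
        have weight_mul : a * t ^ (θ - 1 / p - 1) = t ^ (-(1 / p)) / t * (a * t ^ θ) := by
          rw [sub_sub, sub_eq_neg_add, neg_add, Real.rpow_add ht0, Real.rpow_add ht0,
            Real.rpow_neg_one]
          ring
        rw [weight_mul, ENNReal.ofReal_mul (by positivity)]
        gcongr
        exact hg t ht
    _ = ENNReal.ofReal (∫ t in Ioc (0 : ℝ) 1, a * t ^ (θ - 1 / p - 1)) := by
        refine (ofReal_integral_eq_lintegral_ofReal (integrableOn_rpow.const_mul a) ?_).symm
        filter_upwards [ae_restrict_mem measurableSet_Ioc] with t ht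
        have ht0 : 0 < t := ht.1
        positivity
    _ = ENNReal.ofReal (a / (θ - 1 / p)) := by
        rw [integral_const_mul, ← intervalIntegral.integral_of_le zero_le_one,
          integral_rpow (Or.inl exponent_gt), sub_add_cancel, Real.one_rpow,
          Real.zero_rpow (by linarith), sub_zero, mul_one_div]

/-! ### Functions on the circle -/

section Circle

variable {p : ℝ} {G : UnitAddCircle → ℝ}

lemma measurePreserving_coe_Icc : MeasurePreserving (fun x : ℝ => (x : UnitAddCircle))
    (volume.restrict (Icc 0 1)) volume := by
  simpa only [zero_add, restrict_Ioc_eq_restrict_Icc] using UnitAddCircle.measurePreserving_mk 0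

lemma lpNorm1_coe (hp : 0 < p) (hG : AEStronglyMeasurable G volume) :
    lpNorm1 p (fun x => G x) = eLpNorm G (ENNReal.ofReal p) volume := by
  rw [← eLpNorm_comp_measurePreserving hG measurePreserving_coe_Icc,
    eLpNorm_eq_lintegral_rpow_enorm_toReal (by simpa using hp) ENNReal.ofReal_ne_top,
    ENNReal.toReal_ofReal hp.le, lpNorm1]
  congr! 3 with x
  rw [← ENNReal.ofReal_rpow_of_nonneg (abs_nonneg _) hp.le, Function.comp_apply,
    Real.enorm_eq_ofReal_abs]

lemma lpNorm1_coe_lt_top (hp : 0 < p) (hG : Continuous G) : lpNorm1 p (fun x => G x) < ⊤ := by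
  rw [lpNorm1_coe hp hG.aestronglyMeasurable]
  exact (hG.memLp_of_hasCompactSupport (.of_compactSpace G)).eLpNorm_lt_top

lemma memLp2_mul {H : UnitAddCircle → ℝ} (hp : 0 < p) (hG : Continuous G) (hH : Continuous H) :
    MemLp2 p (fun x y => G x * H y) := by
  have : Continuous fun x : ℝ => (x : UnitAddCircle) := AddCircle.continuous_mk' 1
  refine ⟨Continuous.measurable (by unfold Function.uncurry; fun_prop), ⟨?_, ?_⟩, ?_⟩
  · simp
  · simp
  · rw [lpNorm2_mul hp (by fun_prop) (by fun_prop)]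
    exact ENNReal.mul_lt_top (lpNorm1_coe_lt_top hp hG) (lpNorm1_coe_lt_top hp hH)

lemma lpNorm1_coe_diff_le_two_mul (hp : 1 ≤ p) (hG : AEStronglyMeasurable G volume) (s : ℝ) :
    lpNorm1 p (fun x => G ↑(x + s) - G x) ≤ 2 * lpNorm1 p (fun x => G x) := by
  have hp0 : 0 < p := by linarith
  have shift : MeasurePreserving (fun x : UnitAddCircle => x + s) volume volume :=
    measurePreserving_add_right _ _
  have aestronglyMeasurable_shift : AEStronglyMeasurable (fun x => G (x + s)) volume :=
    hG.comp_measurePreserving shift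
  have eLpNorm_shift : eLpNorm (fun x => G (x + s)) (ENNReal.ofReal p) volume
      = eLpNorm G (ENNReal.ofReal p) volume :=
    eLpNorm_comp_measurePreserving hG shift
  calc lpNorm1 p (fun x => G ↑(x + s) - G x)
      = eLpNorm ((fun x => G (x + s)) - G) (ENNReal.ofReal p) volume :=
        lpNorm1_coe hp0 (aestronglyMeasurable_shift.sub hG)
    _ ≤ eLpNorm (fun x => G (x + s)) (ENNReal.ofReal p) volume
          + eLpNorm G (ENNReal.ofReal p) volume :=
        eLpNorm_sub_le aestronglyMeasurable_shift hG (ENNReal.one_le_ofReal.2 hp)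
    _ = 2 * lpNorm1 p (fun x => G x) := by rw [eLpNorm_shift, lpNorm1_coe hp0 hG, two_mul]

lemma lpNorm1_coe_diff_le_of_lipschitzWith {K : ℝ≥0} (hp : 0 < p) (hG : LipschitzWith K G)
    (s : ℝ) : lpNorm1 p (fun x => G ↑(x + s) - G x) ≤ K * ENNReal.ofReal |s| := by
  have continuous_diff : Continuous fun x => G (x + s) - G x := by
    have := hG.continuous
    fun_prop
  have enorm_diff_le (x : UnitAddCircle) : ‖G (x + s) - G x‖ₑ ≤ K * ENNReal.ofReal |s| := by
    rw [← edist_eq_enorm_sub]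
    refine (hG _ _).trans ?_
    rw [edist_eq_enorm_sub, add_sub_cancel_left, ← ofReal_norm]
    gcongr
    exact QuotientAddGroup.norm_mk_le_norm
  calc lpNorm1 p (fun x => G ↑(x + s) - G x)
      = eLpNorm (fun x => G (x + s) - G x) (ENNReal.ofReal p) volume :=
        lpNorm1_coe hp continuous_diff.aestronglyMeasurable
    _ ≤ K * ENNReal.ofReal |s| := by
        simpa [UnitAddCircle.measure_univ] using
          eLpNorm_le_of_ae_enorm_bound (p := ENNReal.ofReal p) (μ := volume)
            (.of_forall enorm_diff_le)

lemma modulus1_coe_le_interpolation {K : ℝ≥0} {θ : ℝ} (hp : 1 ≤ p) (hG : LipschitzWith K G)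
    (hθ : θ ∈ Icc (0 : ℝ) 1) (t : ℝ) :
    modulus1 p (fun x => G x) t
      ≤ (2 * lpNorm1 p (fun x => G x)) ^ (1 - θ) * (K * ENNReal.ofReal t) ^ θ := by
  refine iSup₂_le fun s hs => ?_
  set d := lpNorm1 p (fun x => G ↑(x + s) - G x)
  have d_le_lipschitz : d ≤ K * ENNReal.ofReal t :=
    (lpNorm1_coe_diff_le_of_lipschitzWith (by linarith) hG s).trans
      (by gcongr; exact (abs_of_nonneg hs.1).trans_le hs.2)
  calc d = d ^ (1 - θ) * d ^ θ := by
        rw [← ENNReal.rpow_add_of_nonneg _ _ (sub_nonneg.2 hθ.2) hθ.1, sub_add_cancel,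
          ENNReal.rpow_one]
    _ ≤ _ := by
        gcongr
        · linarith [hθ.2]
        · exact lpNorm1_coe_diff_le_two_mul hp hG.continuous.aestronglyMeasurable s
        · exact hθ.1

end Circle

/-! ### Tent functions -/

section Tent

variable {p δ : ℝ}

/-- The tent of height `1` and half-width `δ` centred at the origin of the circle. The intended
range is `0 < δ ≤ 1 / 2`. -/
noncomputable def tent (δ : ℝ) (x : UnitAddCircle) : ℝ := max 0 (1 - ‖x‖ / δ)

lemma tent_zero (δ : ℝ) : tent δ 0 = 1 := by simp [tent]

lemma tent_eq_zero (hδ : 0 < δ) {x : UnitAddCircle} (hx : δ ≤ ‖x‖) : tent δ x = 0 :=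
  max_eq_left (sub_nonpos.2 ((one_le_div hδ).2 hx))

lemma tent_nonneg (δ : ℝ) (x : UnitAddCircle) : 0 ≤ tent δ x := le_max_left _ _

lemma tent_le_one (hδ : 0 < δ) (x : UnitAddCircle) : tent δ x ≤ 1 :=
  max_le zero_le_one (sub_le_self 1 (by positivity))

lemma lipschitzWith_tent (hδ : 0 < δ) : LipschitzWith (δ⁻¹).toNNReal (tent δ) := by
  have lipschitzWith_affine :
      LipschitzWith (δ⁻¹).toNNReal fun x : UnitAddCircle => 1 - ‖x‖ / δ := by
    refine .of_dist_le_mul fun x y => ?_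
    rw [Real.coe_toNNReal _ (by positivity), dist_sub_left, Real.dist_eq, ← sub_div, abs_div,
      abs_of_pos hδ, div_eq_inv_mul, dist_eq_norm]
    gcongr
    exact abs_norm_sub_norm_le x y
  exact lipschitzWith_affine.const_max 0

lemma one_le_vp_tent (hp : 0 < p) (hδ : 0 < δ) (hδ' : δ ≤ 1 / 2) :
    1 ≤ vp p (fun x => tent δ x) := by
  have tent_half : tent δ ↑(1 / 2 : ℝ) = 0 :=
    tent_eq_zero hδ (by rw [AddCircle.norm_half_period_eq, abs_one]; exact hδ')
  have := ofReal_abs_sub_le_vp hp (fun x => tent δ x) (a := 0) (b := 1 / 2) (by norm_num)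
    (by norm_num)
  simpa only [AddCircle.coe_zero, tent_half, tent_zero, zero_sub, abs_neg, abs_one,
    ENNReal.ofReal_one] using this

lemma lpNorm1_tent_le (hp : 0 < p) (hδ : 0 < δ) :
    lpNorm1 p (fun x => tent δ x) ≤ ENNReal.ofReal ((2 * δ) ^ (1 / p)) := by
  have norm_tent_le_indicator (x : UnitAddCircle) :
      ‖tent δ x‖ ≤ (Metric.closedBall 0 δ).indicator (fun _ => (1 : ℝ)) x := by
    rw [Real.norm_of_nonneg (tent_nonneg δ x)]
    by_cases hx : x ∈ Metric.closedBall 0 δ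
    · rw [indicator_of_mem hx]
      exact tent_le_one hδ x
    · rw [indicator_of_notMem hx, tent_eq_zero hδ]
      simpa using (not_le.1 (mem_closedBall_zero_iff.not.1 hx)).le
  rw [lpNorm1_coe hp (lipschitzWith_tent hδ).continuous.aestronglyMeasurable]
  calc eLpNorm (tent δ) (ENNReal.ofReal p) volume
      ≤ eLpNorm ((Metric.closedBall 0 δ).indicator fun _ => (1 : ℝ)) (ENNReal.ofReal p) volume :=
        eLpNorm_mono_real norm_tent_le_indicator
    _ = ENNReal.ofReal (min 1 (2 * δ)) ^ (1 / p) := by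
        rw [eLpNorm_indicator_const measurableSet_closedBall (by simpa using hp)
          ENNReal.ofReal_ne_top, AddCircle.volume_closedBall, ENNReal.toReal_ofReal hp.le,
          enorm_one, one_mul]
    _ ≤ ENNReal.ofReal (2 * δ) ^ (1 / p) := by gcongr; exact min_le_right _ _
    _ = ENNReal.ofReal ((2 * δ) ^ (1 / p)) :=
        ENNReal.ofReal_rpow_of_nonneg (by positivity) (by positivity)

lemma modulus1_tent_le {θ t : ℝ} (hp : 1 ≤ p) (hδ : 0 < δ) (hθ : θ ∈ Icc (0 : ℝ) 1)
    (ht : 0 ≤ t) : modulus1 p (fun x => tent δ x) t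
      ≤ ENNReal.ofReal ((4 * δ ^ (1 / p)) ^ (1 - θ) * (t / δ) ^ θ) := by
  have hp0 : 0 < p := by linarith
  have two_mul_lpNorm1_le :
      2 * lpNorm1 p (fun x => tent δ x) ≤ ENNReal.ofReal (4 * δ ^ (1 / p)) := by
    have two_rpow_le : (2 : ℝ) ^ (1 / p) ≤ 2 :=
      Real.rpow_le_self_of_one_le one_le_two ((div_le_one hp0).2 hp)
    calc 2 * lpNorm1 p (fun x => tent δ x)
        ≤ ENNReal.ofReal 2 * ENNReal.ofReal ((2 * δ) ^ (1 / p)) := by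
          rw [ENNReal.ofReal_ofNat]
          gcongr
          exact lpNorm1_tent_le hp0 hδ
      _ = ENNReal.ofReal (2 * (2 ^ (1 / p) * δ ^ (1 / p))) := by
          rw [← ENNReal.ofReal_mul two_pos.le, Real.mul_rpow two_pos.le hδ.le]
      _ ≤ ENNReal.ofReal (2 * (2 * δ ^ (1 / p))) := by gcongr
      _ = ENNReal.ofReal (4 * δ ^ (1 / p)) := by ring_nf
  have lipschitz_factor :
      ((δ⁻¹).toNNReal : ℝ≥0∞) * ENNReal.ofReal t = ENNReal.ofReal (t / δ) := by
    rw [div_eq_inv_mul, ENNReal.ofReal_mul (by positivity)]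
    rfl
  have h0 : 0 ≤ 1 - θ := sub_nonneg.2 hθ.2
  calc modulus1 p (fun x => tent δ x) t
      ≤ (2 * lpNorm1 p (fun x => tent δ x)) ^ (1 - θ)
          * (((δ⁻¹).toNNReal : ℝ≥0∞) * ENNReal.ofReal t) ^ θ :=
        modulus1_coe_le_interpolation hp (lipschitzWith_tent hδ) hθ t
    _ ≤ ENNReal.ofReal (4 * δ ^ (1 / p)) ^ (1 - θ) * ENNReal.ofReal (t / δ) ^ θ := by
        rw [lipschitz_factor]
        gcongr
    _ = ENNReal.ofReal ((4 * δ ^ (1 / p)) ^ (1 - θ) * (t / δ) ^ θ) := by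
        rw [ENNReal.ofReal_rpow_of_nonneg (by positivity) h0,
          ENNReal.ofReal_rpow_of_nonneg (by positivity) hθ.1, ← ENNReal.ofReal_mul (by positivity)]

lemma modulus1_tent_half_le {t : ℝ} (hp : 1 ≤ p) (ht : 0 ≤ t) :
    modulus1 p (fun x => tent (1 / 2) x) t ≤ ENNReal.ofReal (2 * t) := by
  have := modulus1_tent_le hp one_half_pos (right_mem_Icc.2 zero_le_one) ht
  rwa [sub_self, Real.rpow_zero, one_mul, Real.rpow_one, div_div_eq_mul_div, div_one,
    mul_comm] at this

lemma besovIntegral_tent_half_le (hp : 2 ≤ p) :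
    besovIntegral p (fun x => tent (1 / 2) x) ≤ ENNReal.ofReal 4 := by
  have one_div_le : 1 / p ≤ 1 / 2 := one_div_le_one_div_of_le two_pos hp
  refine (besovIntegral_le_of_modulus1_le (a := 2) (θ := 1) two_pos.le (by linarith)
    fun t ht => ?_).trans (ENNReal.ofReal_le_ofReal ?_)
  · rw [Real.rpow_one]
    exact modulus1_tent_half_le (by linarith) ht.1.le
  · rw [div_le_iff₀ (by linarith)]
    linarith

variable {ε : ℝ}

lemma one_le_vp_tent_rpow (hp : 1 ≤ p) (hε : 0 < ε) (hε' : ε ≤ 1 / 2) :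
    1 ≤ vp p (fun x => tent (ε ^ (4 * p)) x) :=
  one_le_vp_tent (by linarith) (by positivity)
    ((Real.rpow_le_self_of_le_one hε.le (by linarith) (by linarith)).trans hε')

lemma modulus1_tent_rpow_one_le (hp : 1 ≤ p) (hε : 0 < ε) :
    modulus1 p (fun x => tent (ε ^ (4 * p)) x) 1 ≤ ENNReal.ofReal (4 * ε ^ 4) := by
  have := modulus1_tent_le (p := p) (δ := ε ^ (4 * p)) hp (by positivity)
    (left_mem_Icc.2 zero_le_one) zero_le_one
  have width_rpow : (ε ^ (4 * p)) ^ (1 / p) = ε ^ 4 := by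
    rw [← Real.rpow_mul hε.le, mul_assoc, mul_one_div_cancel (by linarith), mul_one,
      Real.rpow_ofNat]
  rwa [width_rpow, sub_zero, Real.rpow_one, Real.rpow_zero, mul_one] at this

lemma modulus1_tent_rpow_le {t : ℝ} (hp : 6 ≤ p) (hε : 0 < ε) (hε' : ε ≤ 1) (ht : 0 ≤ t) :
    modulus1 p (fun x => tent (ε ^ (4 * p)) x) t
      ≤ ENNReal.ofReal (4 / ε ^ 3 * t ^ (3 / (2 * p))) := by
  have hp0 : 0 < p := by linarith
  set θ := 3 / (2 * p) with hθ
  have θ_nonneg : 0 ≤ θ := by positivity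
  have θ_le : θ ≤ 1 / 4 := by rw [hθ, div_le_div_iff₀ (by positivity) four_pos]; linarith
  have norm_factor_le : (4 * (ε ^ (4 * p)) ^ (1 / p)) ^ (1 - θ) ≤ 4 * ε ^ 3 := by
    rw [Real.mul_rpow four_pos.le (by positivity), ← Real.rpow_mul hε.le, ← Real.rpow_mul hε.le,
      ← Real.rpow_ofNat ε 3, mul_assoc 4 p, mul_one_div_cancel hp0.ne', mul_one]
    gcongr ?_ * ?_
    · exact Real.rpow_le_self_of_one_le (by norm_num) (sub_le_self 1 θ_nonneg)
    · exact Real.rpow_le_rpow_of_exponent_ge hε hε' (by linarith)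
  have width_rpow : (ε ^ (4 * p)) ^ θ = ε ^ 6 := by
    rw [← Real.rpow_mul hε.le, ← Real.rpow_ofNat ε 6, hθ]
    congr 1
    field_simp
    norm_num
  refine (modulus1_tent_le (θ := θ) (by linarith) (by positivity) ⟨θ_nonneg, by linarith⟩
    ht).trans (ENNReal.ofReal_le_ofReal ?_)
  calc (4 * (ε ^ (4 * p)) ^ (1 / p)) ^ (1 - θ) * (t / ε ^ (4 * p)) ^ θ
      ≤ 4 * ε ^ 3 * (t ^ θ / ε ^ 6) := by
        rw [Real.div_rpow ht (by positivity), width_rpow]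
        gcongr
    _ = 4 / ε ^ 3 * t ^ θ := by field_simp

lemma besovIntegral_tent_rpow_le (hp : 6 ≤ p) (hε : 0 < ε) (hε' : ε ≤ 1) :
    besovIntegral p (fun x => tent (ε ^ (4 * p)) x) ≤ ENNReal.ofReal (8 * p / ε ^ 3) := by
  have : 0 < p := by linarith
  have exponent_gap : 3 / (2 * p) - 1 / p = 1 / (2 * p) := by field_simp; norm_num
  have one_div_lt : 1 / p < 3 / (2 * p) := sub_pos.1 (by rw [exponent_gap]; positivity)
  calc besovIntegral p (fun x => tent (ε ^ (4 * p)) x)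
      ≤ ENNReal.ofReal (4 / ε ^ 3 / (3 / (2 * p) - 1 / p)) :=
        besovIntegral_le_of_modulus1_le (by positivity) one_div_lt
          fun t ht => modulus1_tent_rpow_le hp hε hε' ht.1.le
    _ = ENNReal.ofReal (8 * p / ε ^ 3) := by
        rw [exponent_gap]
        congr 1
        field_simp
        norm_num

end Tent

/-! ### Testing the variation inequality -/

/-- The inequality `v_p⁽²⁾(f) ≤ A [ω(f;1,1)_p + a K_p(f) + b I_p(f)]` for all continuous
`f ∈ L^p([0,1]²)` with `I_p(f) < ∞`, at a single exponent `p`. -/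
def VariationInequality (p A a b : ℝ) : Prop :=
  ∀ f : ℝ → ℝ → ℝ, Continuous (Function.uncurry f) → MemLp2 p f → Ip p f < ⊤ →
    vp2 p f ≤ ENNReal.ofReal A *
      (mixedModulus p f 1 1 + ENNReal.ofReal a * Kp p f + ENNReal.ofReal b * Ip p f)

namespace VariationInequality

variable {p A a b ε : ℝ}

lemma one_le_of_tensor {G H : UnitAddCircle → ℝ} {M N P Q : ℝ} (hf : VariationInequality p A a b)
    (hp : 0 < p) (hA : 0 ≤ A) (ha : 0 ≤ a) (hb : 0 ≤ b) (hM : 0 ≤ M) (hN : 0 ≤ N) (hP : 0 ≤ P)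
    (hQ : 0 ≤ Q) (hG : Continuous G) (hH : Continuous H)
    (vp_G : 1 ≤ vp p fun x => G x) (vp_H : 1 ≤ vp p fun x => H x)
    (modulus_G : modulus1 p (fun x => G x) 1 ≤ ENNReal.ofReal M)
    (modulus_H : modulus1 p (fun x => H x) 1 ≤ ENNReal.ofReal N)
    (besov_G : besovIntegral p (fun x => G x) ≤ ENNReal.ofReal P)
    (besov_H : besovIntegral p (fun x => H x) ≤ ENNReal.ofReal Q) :
    1 ≤ A * (M * N + a * (P * N + M * Q) + b * (P * Q)) := by
  have : Continuous fun x : ℝ => (x : UnitAddCircle) := AddCircle.continuous_mk' 1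
  have measurable_G : Measurable fun x : ℝ => G x := by fun_prop
  have measurable_H : Measurable fun x : ℝ => H x := by fun_prop
  have Ip_lt_top : Ip p (fun x y => G x * H y) < ⊤ := by
    rw [Ip_mul hp measurable_G measurable_H]
    exact ENNReal.mul_lt_top (besov_G.trans_lt ENNReal.ofReal_lt_top)
      (besov_H.trans_lt ENNReal.ofReal_lt_top)
  rw [← ENNReal.one_le_ofReal]
  calc 1 ≤ vp p (fun x => G x) * vp p (fun x => H x) := one_le_mul vp_G vp_H
    _ ≤ vp2 p (fun x y => G x * H y) := vp_mul_vp_le_vp2 p _ _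
    _ ≤ _ := hf _ (by unfold Function.uncurry; fun_prop) (memLp2_mul hp hG hH) Ip_lt_top
    _ ≤ ENNReal.ofReal A * (ENNReal.ofReal M * ENNReal.ofReal N
          + ENNReal.ofReal a * (ENNReal.ofReal P * ENNReal.ofReal N
            + ENNReal.ofReal M * ENNReal.ofReal Q)
          + ENNReal.ofReal b * (ENNReal.ofReal P * ENNReal.ofReal Q)) := by
        rw [mixedModulus_mul hp measurable_G measurable_H, Kp_mul hp measurable_G measurable_H,
          Ip_mul hp measurable_G measurable_H]
        gcongr
    _ = ENNReal.ofReal (A * (M * N + a * (P * N + M * Q) + b * (P * Q))) := by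
        rw [ENNReal.ofReal_mul hA, ENNReal.ofReal_add (by positivity) (by positivity),
          ENNReal.ofReal_add (by positivity) (by positivity), ENNReal.ofReal_mul hM,
          ENNReal.ofReal_mul ha, ENNReal.ofReal_add (by positivity) (by positivity),
          ENNReal.ofReal_mul hP, ENNReal.ofReal_mul hM, ENNReal.ofReal_mul hb,
          ENNReal.ofReal_mul hP]

lemma one_le_tent_rpow_tent_half (hf : VariationInequality p A a b) (hp : 6 ≤ p) (hε : 0 < ε)
    (hε' : ε ≤ 1 / 2) (hA : 0 ≤ A) (ha : 0 ≤ a) (hb : 0 ≤ b) :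
    1 ≤ A * (4 * ε ^ 4 * 2 + a * (8 * p / ε ^ 3 * 2 + 4 * ε ^ 4 * 4) + b * (8 * p / ε ^ 3 * 4)) :=
  have hp0 : 0 < p := by linarith
  have width_pos : 0 < ε ^ (4 * p) := by positivity
  hf.one_le_of_tensor hp0 hA ha hb (by positivity) (by positivity) (by positivity) (by positivity)
    (lipschitzWith_tent width_pos).continuous (lipschitzWith_tent one_half_pos).continuous
    (one_le_vp_tent_rpow (by linarith) hε hε')
    (one_le_vp_tent hp0 one_half_pos le_rfl)
    (modulus1_tent_rpow_one_le (by linarith) hε)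
    (by simpa using modulus1_tent_half_le (p := p) (by linarith) zero_le_one)
    (besovIntegral_tent_rpow_le hp hε (by linarith)) (besovIntegral_tent_half_le (by linarith))

lemma one_le_tent_rpow_tent_rpow (hf : VariationInequality p A a b) (hp : 6 ≤ p) (hε : 0 < ε)
    (hε' : ε ≤ 1 / 2) (hA : 0 ≤ A) (ha : 0 ≤ a) (hb : 0 ≤ b) :
    1 ≤ A * (4 * ε ^ 4 * (4 * ε ^ 4)
      + a * (8 * p / ε ^ 3 * (4 * ε ^ 4) + 4 * ε ^ 4 * (8 * p / ε ^ 3))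
      + b * (8 * p / ε ^ 3 * (8 * p / ε ^ 3))) :=
  have hp0 : 0 < p := by linarith
  have width_pos : 0 < ε ^ (4 * p) := by positivity
  have continuous_tent := (lipschitzWith_tent width_pos).continuous
  have vp_tent := one_le_vp_tent_rpow (p := p) (by linarith) hε hε'
  have modulus_tent := modulus1_tent_rpow_one_le (p := p) (by linarith) hε
  have besov_tent := besovIntegral_tent_rpow_le hp hε (by linarith)
  hf.one_le_of_tensor hp0 hA ha hb (by positivity) (by positivity) (by positivity) (by positivity)
    continuous_tent continuous_tent vp_tent vp_tent modulus_tent modulus_tent besov_tent besov_tent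

lemma le_mul_coeff_Kp (hf : VariationInequality p A a b) (hp : 6 ≤ p) (hp' : 1 / ε ^ 4 ≤ p)
    (hε : 0 < ε) (hε' : ε ≤ 1 / 2) (hA : 0 < A) (hAε : 160 * (A * ε) ≤ 1) (ha : 0 ≤ a)
    (ha' : a ≤ 1 / p) (hb : 0 ≤ b) (hb' : b ≤ 1 / p ^ 2) :
    ε ^ 3 / (32 * A) ≤ p * a := by
  have hp0 : 0 < p := by linarith
  have ε_pow_le : ε ^ 4 ≤ ε := pow_le_of_le_one hε.le (by linarith) (by norm_num)
  have a_le_one : a ≤ 1 := ha'.trans ((div_le_one hp0).2 (by linarith))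
  have Kp_term : a * (4 * ε ^ 4 * 4) ≤ 16 * ε := by
    calc a * (4 * ε ^ 4 * 4) ≤ 1 * (4 * ε * 4) := by gcongr
      _ = 16 * ε := by ring
  have Ip_term : b * (8 * p / ε ^ 3 * 4) ≤ 32 * ε := by
    calc b * (8 * p / ε ^ 3 * 4) ≤ 1 / p ^ 2 * (8 * p / ε ^ 3 * 4) := by gcongr
      _ = 32 * ε * (1 / ε ^ 4 / p) := by field_simp; norm_num
      _ ≤ 32 * ε * 1 := by gcongr; exact (div_le_one hp0).2 hp'
      _ = 32 * ε := mul_one _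
  have one_le : 1 ≤ 56 * (A * ε) + 16 * A * (p * a) / ε ^ 3 := by
    calc 1 ≤ A * (4 * ε ^ 4 * 2 + a * (8 * p / ε ^ 3 * 2 + 4 * ε ^ 4 * 4)
          + b * (8 * p / ε ^ 3 * 4)) := hf.one_le_tent_rpow_tent_half hp hε hε' hA.le ha hb
      _ ≤ A * (56 * ε + a * (8 * p / ε ^ 3 * 2)) :=
          mul_le_mul_of_nonneg_left (by linarith) hA.le
      _ = 56 * (A * ε) + 16 * A * (p * a) / ε ^ 3 := by ring
  have half_le : 1 / 2 ≤ 16 * A * (p * a) / ε ^ 3 := by linarith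
  rw [le_div_iff₀ (by positivity)] at half_le
  rw [div_le_iff₀ (by positivity)]
  linarith

lemma le_sq_mul_coeff_Ip (hf : VariationInequality p A a b) (hp : 6 ≤ p) (hε : 0 < ε)
    (hε' : ε ≤ 1 / 2) (hA : 0 < A) (hAε : 160 * (A * ε) ≤ 1) (ha : 0 ≤ a) (ha' : a ≤ 1 / p)
    (hb : 0 ≤ b) : ε ^ 6 / (128 * A) ≤ p ^ 2 * b := by
  have : 0 < p := by linarith
  have modulus_term : 4 * ε ^ 4 * (4 * ε ^ 4) ≤ 16 * ε := by
    have : ε ^ 8 ≤ ε := pow_le_of_le_one hε.le (by linarith) (by norm_num)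
    linarith
  have Kp_term : a * (8 * p / ε ^ 3 * (4 * ε ^ 4) + 4 * ε ^ 4 * (8 * p / ε ^ 3)) ≤ 64 * ε := by
    calc a * (8 * p / ε ^ 3 * (4 * ε ^ 4) + 4 * ε ^ 4 * (8 * p / ε ^ 3))
        ≤ 1 / p * (8 * p / ε ^ 3 * (4 * ε ^ 4) + 4 * ε ^ 4 * (8 * p / ε ^ 3)) := by gcongr
      _ = 64 * ε := by field_simp; norm_num
  have one_le : 1 ≤ 80 * (A * ε) + 64 * A * (p ^ 2 * b) / ε ^ 6 := by
    calc 1 ≤ A * (4 * ε ^ 4 * (4 * ε ^ 4)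
          + a * (8 * p / ε ^ 3 * (4 * ε ^ 4) + 4 * ε ^ 4 * (8 * p / ε ^ 3))
          + b * (8 * p / ε ^ 3 * (8 * p / ε ^ 3))) :=
          hf.one_le_tent_rpow_tent_rpow hp hε hε' hA.le ha hb
      _ ≤ A * (80 * ε + b * (8 * p / ε ^ 3 * (8 * p / ε ^ 3))) := by gcongr; linarith
      _ = 80 * (A * ε) + 64 * A * (p ^ 2 * b) / ε ^ 6 := by ring
  have half_le : 1 / 2 ≤ 64 * A * (p ^ 2 * b) / ε ^ 6 := by linarith
  rw [le_div_iff₀ (by positivity)] at half_le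
  rw [div_le_iff₀ (by positivity)]
  linarith

end VariationInequality

lemma liminf_pos_of_eventually_mem_Icc {ι : Type*} {l : Filter ι} [l.NeBot] {u : ι → ℝ} {c C : ℝ}
    (hc : 0 < c) (hu : ∀ᶠ i in l, u i ∈ Icc c C) : 0 < liminf u l :=
  hc.trans_le <| le_liminf_of_le
    (isBoundedUnder_of_eventually_le (hu.mono fun _ hi => hi.2)).isCoboundedUnder_ge
    (hu.mono fun _ hi => hi.1)

/-- If `α_p ≤ 1/p`, `β_p ≤ 1/p²` for `p > 2`, and there is `A > 0` with
`v_p⁽²⁾(f) ≤ A [ω(f;1,1)_p + α_p K_p(f) + β_p I_p(f)]` for every `p > 2` and every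
continuous `f ∈ L^p([0,1]²)` with `I_p(f) < ∞`, then
`liminf_{p→∞} p α_p > 0` and `liminf_{p→∞} p² β_p > 0`. -/
theorem statement12 (α β : ℝ → ℝ)
    (hα : ∀ p : ℝ, 2 < p → 0 < α p ∧ α p ≤ 1 / p)
    (hβ : ∀ p : ℝ, 2 < p → 0 < β p ∧ β p ≤ 1 / p ^ 2)
    (A : ℝ) (hA : 0 < A)
    (hbound : ∀ p : ℝ, 2 < p → ∀ f : ℝ → ℝ → ℝ,
      Continuous (Function.uncurry f) → MemLp2 p f → Ip p f < ⊤ →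
        vp2 p f ≤ ENNReal.ofReal A *
          (mixedModulus p f 1 1 + ENNReal.ofReal (α p) * Kp p f
            + ENNReal.ofReal (β p) * Ip p f)) :
    0 < Filter.liminf (fun p : ℝ => p * α p) Filter.atTop ∧
    0 < Filter.liminf (fun p : ℝ => p ^ 2 * β p) Filter.atTop := by
  obtain ⟨ε, hε, hεlt⟩ := exists_between (show 0 < min (1 / 2) (1 / (160 * A)) by positivity)
  have hε' : ε ≤ 1 / 2 := (hεlt.trans_le (min_le_left _ _)).le
  have hAε : 160 * (A * ε) ≤ 1 := by
    rw [← mul_assoc, mul_comm]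
    exact (le_div_iff₀ (by positivity)).1 (hεlt.trans_le (min_le_right _ _)).le
  have ineq (p : ℝ) (hp : 2 < p) : VariationInequality p A (α p) (β p) := hbound p hp
  constructor
  · refine liminf_pos_of_eventually_mem_Icc (c := ε ^ 3 / (32 * A)) (C := 1) (by positivity) ?_
    filter_upwards [eventually_ge_atTop 6, eventually_ge_atTop (1 / ε ^ 4)] with p hp hp'
    have hp2 : 2 < p := by linarith
    obtain ⟨⟨α_pos, α_le⟩, β_pos, β_le⟩ := And.intro (hα p hp2) (hβ p hp2)
    exact ⟨(ineq p hp2).le_mul_coeff_Kp hp hp' hε hε' hA hAε α_pos.le α_le β_pos.le β_le,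
      (le_div_iff₀' (by linarith)).1 α_le⟩
  · refine liminf_pos_of_eventually_mem_Icc (c := ε ^ 6 / (128 * A)) (C := 1) (by positivity) ?_
    filter_upwards [eventually_ge_atTop 6] with p hp
    have hp2 : 2 < p := by linarith
    obtain ⟨⟨α_pos, α_le⟩, β_pos, β_le⟩ := And.intro (hα p hp2) (hβ p hp2)
    exact ⟨(ineq p hp2).le_sq_mul_coeff_Ip hp hε hε' hA hAε α_pos.le α_le β_pos.le,
      (le_div_iff₀' (by positivity)).1 β_le⟩
end

section
/- There exists an absolute constant A > 0 such that for every 1 ≤ p < ∞, every n,m ∈ ℕ, and every trigonometric polynomial T of degree (n,m) in two variables, v_p^{(2)}(T) ≤ A·(nm)^{1/p}·‖T‖_p. -/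
open MeasureTheory Filter Set
open scoped ENNReal

/-!
Trigonometric polynomials of degree `n` in one variable are reproduced by convolution with a kernel
of de la Vallée-Poussin type `V`, the normalised product of the exponential sums over `[0, n]` and
`[-2n, n]`. Parseval and Cauchy–Schwarz give `‖V‖₁ ≤ 2` and `‖V'‖₁ ≤ 12πn` over a period, so the
increments `V (xᵢ₊₁ - t) - V (xᵢ - t)` have `L¹` norm at most `4` in `t` and sum to at most
`12πn` over any partition of a period. Schur's test then yields the one-variable inequality
`∑ |Δg(xᵢ)|^p ≤ 40^p n ‖g‖_p^p`. Applying it in `x` to `T(·, yⱼ₊₁) - T(·, yⱼ)` and then in `y` to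
the sections `T(x, ·)` gives the theorem.
-/

section SchurTest

variable {α ι : Type*} [MeasurableSpace α] {μ : Measure α} {p : ℝ}

lemma lintegral_mul_rpow_le (hp : 1 ≤ p) {f w : α → ℝ≥0∞} (hf : AEMeasurable f μ)
    (hw : AEMeasurable w μ) :
    (∫⁻ t, f t * w t ∂μ) ^ p ≤ (∫⁻ t, w t ∂μ) ^ (p - 1) * ∫⁻ t, f t ^ p * w t ∂μ := by
  have hp0 : 0 < p := by linarith
  have hq : 0 ≤ 1 - 1 / p := by
    rw [sub_nonneg, div_le_one hp0]
    exact hp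
  have factor (t : α) : (f t ^ p * w t) ^ (1 / p) * w t ^ (1 - 1 / p) = f t * w t := by
    rw [ENNReal.mul_rpow_of_nonneg _ _ (by positivity), ← ENNReal.rpow_mul,
      mul_one_div_cancel hp0.ne', ENNReal.rpow_one, mul_assoc,
      ← ENNReal.rpow_add_of_nonneg _ _ (by positivity) hq, add_sub_cancel, ENNReal.rpow_one]
  have holder := ENNReal.lintegral_mul_norm_pow_le ((hf.pow_const p).mul hw) hw
    (p := 1 / p) (q := 1 - 1 / p) (by positivity) hq (by ring)
  simp only [Pi.mul_apply, factor] at holder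
  calc (∫⁻ t, f t * w t ∂μ) ^ p
      ≤ ((∫⁻ t, f t ^ p * w t ∂μ) ^ (1 / p) * (∫⁻ t, w t ∂μ) ^ (1 - 1 / p)) ^ p := by
        gcongr
    _ = (∫⁻ t, w t ∂μ) ^ (p - 1) * ∫⁻ t, f t ^ p * w t ∂μ := by
        rw [ENNReal.mul_rpow_of_nonneg _ _ hp0.le, ← ENNReal.rpow_mul, ← ENNReal.rpow_mul,
          one_div_mul_cancel hp0.ne', ENNReal.rpow_one, mul_comm, sub_mul, one_mul,
          one_div_mul_cancel hp0.ne']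

lemma sum_lintegral_mul_rpow_le (hp : 1 ≤ p) {s : Finset ι} {f : α → ℝ≥0∞} {w : ι → α → ℝ≥0∞}
    {C D : ℝ≥0∞} (hf : AEMeasurable f μ) (hw : ∀ i ∈ s, AEMeasurable (w i) μ)
    (hC : ∀ i ∈ s, ∫⁻ t, w i t ∂μ ≤ C) (hD : ∀ᵐ t ∂μ, ∑ i ∈ s, w i t ≤ D) :
    ∑ i ∈ s, (∫⁻ t, f t * w i t ∂μ) ^ p ≤ C ^ (p - 1) * D * ∫⁻ t, f t ^ p ∂μ := by
  calc ∑ i ∈ s, (∫⁻ t, f t * w i t ∂μ) ^ p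
      ≤ ∑ i ∈ s, C ^ (p - 1) * ∫⁻ t, f t ^ p * w i t ∂μ := by
        refine Finset.sum_le_sum fun i hi ↦ (lintegral_mul_rpow_le hp hf (hw i hi)).trans ?_
        gcongr
        exact hC i hi
    _ = C ^ (p - 1) * ∫⁻ t, f t ^ p * ∑ i ∈ s, w i t ∂μ := by
        simp_rw [Finset.mul_sum]
        rw [lintegral_finsetSum' s fun i hi ↦ (hf.pow_const p).fun_mul (hw i hi), Finset.mul_sum]
    _ ≤ C ^ (p - 1) * ∫⁻ t, f t ^ p * D ∂μ :=
        mul_le_mul_right (lintegral_mono_ae (hD.mono fun t ht ↦ by gcongr)) _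
    _ = C ^ (p - 1) * D * ∫⁻ t, f t ^ p ∂μ := by
        rw [lintegral_mul_const'' _ (hf.pow_const p)]
        ring

end SchurTest

section Calculus

lemma sum_norm_sub_le_integral_norm_deriv {E : Type*} [NormedAddCommGroup E] [NormedSpace ℝ E]
    [CompleteSpace E] {f f' : ℝ → E} (hf : ∀ u, HasDerivAt f (f' u) u) (hf' : Continuous f')
    {N : ℕ} {x : ℕ → ℝ} (hx : ∀ i < N, x i ≤ x (i + 1)) :
    ∑ i ∈ Finset.range N, ‖f (x (i + 1)) - f (x i)‖ ≤ ∫ u in x 0..x N, ‖f' u‖ := by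
  calc ∑ i ∈ Finset.range N, ‖f (x (i + 1)) - f (x i)‖
      ≤ ∑ i ∈ Finset.range N, ∫ u in x i..x (i + 1), ‖f' u‖ := by
        refine Finset.sum_le_sum fun i hi ↦ ?_
        rw [← intervalIntegral.integral_eq_sub_of_hasDerivAt (fun u _ ↦ hf u)
          (hf'.intervalIntegrable _ _)]
        exact intervalIntegral.norm_integral_le_integral_norm (hx i (Finset.mem_range.1 hi))
    _ = ∫ u in x 0..x N, ‖f' u‖ :=
        intervalIntegral.sum_integral_adjacent_intervals
          fun i _ ↦ hf'.norm.intervalIntegrable _ _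

lemma intervalIntegral_norm_add_le {E : Type*} [NormedAddCommGroup E] {f g : ℝ → E}
    (hf : Continuous f) (hg : Continuous g) {a b : ℝ} (hab : a ≤ b) :
    ∫ x in a..b, ‖f x + g x‖ ≤ (∫ x in a..b, ‖f x‖) + ∫ x in a..b, ‖g x‖ := by
  have hfg := (hf.norm.add hg.norm).intervalIntegrable (μ := volume) a b
  rw [← intervalIntegral.integral_add (hf.norm.intervalIntegrable _ _)
    (hg.norm.intervalIntegrable _ _)]
  exact intervalIntegral.integral_mono_on hab ((hf.add hg).norm.intervalIntegrable _ _) hfg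
    fun x _ ↦ norm_add_le _ _

lemma integral_norm_mul_norm_le_sqrt_mul_sqrt {E : Type*} [NormedAddCommGroup E] {f g : ℝ → E}
    (hf : Continuous f) (hg : Continuous g) {a b : ℝ} (hab : a ≤ b) :
    ∫ x in a..b, ‖f x‖ * ‖g x‖ ≤ √(∫ x in a..b, ‖f x‖ ^ 2) * √(∫ x in a..b, ‖g x‖ ^ 2) := by
  have memLp {h : ℝ → E} (hh : Continuous h) :
      MemLp h (ENNReal.ofReal 2) (volume.restrict (Ioc a b)) :=
    ENNReal.ofReal_ofNat 2 ▸ (memLp_two_iff_integrable_sq_norm hh.aestronglyMeasurable).2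
      (hh.norm.pow 2).integrableOn_Ioc
  simpa only [intervalIntegral.integral_of_le hab, Real.sqrt_eq_rpow, Real.rpow_ofNat] using
    integral_mul_norm_le_Lp_mul_Lq .two_two (memLp hf) (memLp hg)

lemma lintegral_enorm_comp_sub_left {E : Type*} [NormedAddCommGroup E] {K : ℝ → E}
    (hK : Continuous K) (x : ℝ) :
    ∫⁻ t in Icc (0 : ℝ) 1, ‖K (x - t)‖ₑ = ENNReal.ofReal (∫ u in (x - 1)..x, ‖K u‖) := by
  have hint : IntegrableOn (fun t ↦ K (x - t)) (Icc 0 1) :=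
    (hK.comp (continuous_const.sub continuous_id)).continuousOn.integrableOn_Icc
  rw [← ofReal_integral_norm_eq_lintegral_enorm hint, integral_Icc_eq_integral_Ioc,
    ← intervalIntegral.integral_of_le zero_le_one,
    intervalIntegral.integral_comp_sub_left (fun u ↦ ‖K u‖) x, sub_zero]

end Calculus

section ReproducingKernel

variable {g K K' : ℝ → ℂ}

lemma enorm_sub_le_lintegral_of_reproducing (hg : Continuous g) (hK : Continuous K)
    (hrep : ∀ x, ∫ t in (0 : ℝ)..1, g t * K (x - t) = g x) (x x' : ℝ) :
    ‖g x' - g x‖ₑ ≤ ∫⁻ t in Icc (0 : ℝ) 1, ‖g t‖ₑ * ‖K (x' - t) - K (x - t)‖ₑ := by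
  have hint (z : ℝ) : IntervalIntegrable (fun t ↦ g t * K (z - t)) volume 0 1 :=
    Continuous.intervalIntegrable (by fun_prop) _ _
  rw [← hrep x, ← hrep x', ← intervalIntegral.integral_sub (hint x') (hint x),
    intervalIntegral.integral_of_le zero_le_one, ← integral_Icc_eq_integral_Ioc]
  simp_rw [← enorm_mul, mul_sub]
  exact enorm_integral_le_lintegral_enorm _

variable {B B' : ℝ}

lemma lintegral_enorm_increment_le (hK : Continuous K) (hB : ∀ a, ∫ u in a..(a + 1), ‖K u‖ ≤ B)
    (x x' : ℝ) :
    ∫⁻ t in Icc (0 : ℝ) 1, ‖K (x' - t) - K (x - t)‖ₑ ≤ 2 * ENNReal.ofReal B := by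
  have translate (z : ℝ) : ∫⁻ t in Icc (0 : ℝ) 1, ‖K (z - t)‖ₑ ≤ ENNReal.ofReal B := by
    rw [lintegral_enorm_comp_sub_left hK]
    simpa only [sub_add_cancel] using ENNReal.ofReal_le_ofReal (hB (z - 1))
  calc ∫⁻ t in Icc (0 : ℝ) 1, ‖K (x' - t) - K (x - t)‖ₑ
      ≤ ∫⁻ t in Icc (0 : ℝ) 1, (‖K (x' - t)‖ₑ + ‖K (x - t)‖ₑ) :=
        lintegral_mono fun t ↦ enorm_sub_le
    _ = (∫⁻ t in Icc (0 : ℝ) 1, ‖K (x' - t)‖ₑ) + ∫⁻ t in Icc (0 : ℝ) 1, ‖K (x - t)‖ₑ :=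
        lintegral_add_left (hK.comp (by fun_prop)).measurable.enorm _
    _ ≤ 2 * ENNReal.ofReal B := by
        rw [two_mul]
        exact add_le_add (translate x') (translate x)

variable {N : ℕ} {x : ℕ → ℝ}

lemma sum_enorm_increment_le (hderiv : ∀ u, HasDerivAt K (K' u) u) (hK' : Continuous K')
    (hB' : ∀ a, ∫ u in a..(a + 1), ‖K' u‖ ≤ B') (hx : ∀ i < N, x i ≤ x (i + 1))
    (hN : x N = x 0 + 1) (t : ℝ) :
    ∑ i ∈ Finset.range N, ‖K (x (i + 1) - t) - K (x i - t)‖ₑ ≤ ENNReal.ofReal B' := by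
  simp_rw [← ofReal_norm]
  rw [← ENNReal.ofReal_sum_of_nonneg fun i _ ↦ norm_nonneg _]
  refine ENNReal.ofReal_le_ofReal ?_
  calc ∑ i ∈ Finset.range N, ‖K (x (i + 1) - t) - K (x i - t)‖
      ≤ ∫ u in (x 0 - t)..(x N - t), ‖K' u‖ :=
        sum_norm_sub_le_integral_norm_deriv (x := fun i ↦ x i - t) hderiv hK'
          fun i hi ↦ sub_le_sub_right (hx i hi) t
    _ ≤ B' := by
        rw [hN, add_sub_right_comm]
        exact hB' _

lemma sum_enorm_sub_rpow_le_of_reproducing {p : ℝ} (hp : 1 ≤ p) (hg : Continuous g)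
    (hrep : ∀ x, ∫ t in (0 : ℝ)..1, g t * K (x - t) = g x)
    (hderiv : ∀ u, HasDerivAt K (K' u) u) (hK' : Continuous K')
    (hB : ∀ a, ∫ u in a..(a + 1), ‖K u‖ ≤ B) (hB' : ∀ a, ∫ u in a..(a + 1), ‖K' u‖ ≤ B')
    (hx : ∀ i < N, x i ≤ x (i + 1)) (hN : x N = x 0 + 1) :
    ∑ i ∈ Finset.range N, ‖g (x (i + 1)) - g (x i)‖ₑ ^ p
      ≤ (2 * ENNReal.ofReal B) ^ (p - 1) * ENNReal.ofReal B'
        * ∫⁻ t in Icc (0 : ℝ) 1, ‖g t‖ₑ ^ p := by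
  have hK : Continuous K := continuous_iff_continuousAt.2 fun u ↦ (hderiv u).continuousAt
  calc ∑ i ∈ Finset.range N, ‖g (x (i + 1)) - g (x i)‖ₑ ^ p
      ≤ ∑ i ∈ Finset.range N,
          (∫⁻ t in Icc (0 : ℝ) 1, ‖g t‖ₑ * ‖K (x (i + 1) - t) - K (x i - t)‖ₑ) ^ p := by
        gcongr with i
        exact enorm_sub_le_lintegral_of_reproducing hg hK hrep _ _
    _ ≤ _ := sum_lintegral_mul_rpow_le hp hg.measurable.enorm.aemeasurable
        (fun i _ ↦ Continuous.aemeasurable (by fun_prop))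
        (fun i _ ↦ lintegral_enorm_increment_le hK hB _ _)
        (.of_forall fun t ↦ sum_enorm_increment_le hderiv hK' hB' hx hN t)

end ReproducingKernel

section TrigSum

/-- The exponential sum `∑_{k ∈ S} c_k e^{2πikx}`, as a function on the real line. -/
noncomputable def trigSum (S : Finset ℤ) (c : ℤ → ℂ) (x : ℝ) : ℂ :=
  ∑ k ∈ S, c k * fourier k (x : UnitAddCircle)

@[fun_prop]
lemma continuous_fourier_coe (k : ℤ) : Continuous fun x : ℝ ↦ fourier k (x : UnitAddCircle) :=
  (fourier k).continuous.comp (AddCircle.continuous_mk' 1)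

lemma integral_fourier_coe (k : ℤ) (a : ℝ) :
    ∫ x in a..(a + 1), fourier k (x : UnitAddCircle) = if k = 0 then 1 else 0 := by
  have coeff := fourierCoeff_eq_intervalIntegral (T := 1) (fourier k) 0 a
  rw [fourierCoeff_fourier] at coeff
  simpa [Pi.single_apply, eq_comm] using coeff.symm

lemma integral_fourier_mul_fourier_sub (j k : ℤ) (x : ℝ) :
    ∫ t in (0 : ℝ)..1, fourier j (t : UnitAddCircle) * fourier k ((x - t : ℝ) : UnitAddCircle)
      = if k = j then fourier j (x : UnitAddCircle) else 0 := by
  have split (t : ℝ) :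
      fourier j (t : UnitAddCircle) * fourier k ((x - t : ℝ) : UnitAddCircle)
        = fourier k (x : UnitAddCircle) * fourier (j - k) (t : UnitAddCircle) := by
    simp only [fourier_coe_apply, ← Complex.exp_add]
    push_cast
    ring_nf
  have orthogonal := integral_fourier_coe (j - k) 0
  rw [zero_add] at orthogonal
  simp_rw [split, intervalIntegral.integral_const_mul, orthogonal, sub_eq_zero, eq_comm (a := j)]
  split_ifs with h <;> simp [h]

variable (S : Finset ℤ) (c : ℤ → ℂ)

@[fun_prop]
lemma continuous_trigSum : Continuous (trigSum S c) := by
  unfold trigSum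
  fun_prop

lemma hasDerivAt_trigSum (x : ℝ) :
    HasDerivAt (trigSum S c) (trigSum S (fun k ↦ c k * (2 * Real.pi * Complex.I * k)) x) x := by
  unfold trigSum
  refine HasDerivAt.fun_sum fun k _ ↦ ?_
  simpa [mul_assoc] using (hasDerivAt_fourier 1 k x).const_mul (c k)

lemma integral_norm_trigSum_sq (a : ℝ) :
    ∫ x in a..(a + 1), ‖trigSum S c x‖ ^ 2 = ∑ k ∈ S, ‖c k‖ ^ 2 := by
  have expand (x : ℝ) : ((‖trigSum S c x‖ ^ 2 : ℝ) : ℂ)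
      = ∑ k ∈ S, ∑ l ∈ S, c k * (starRingEnd ℂ) (c l) * fourier (k - l) (x : UnitAddCircle) := by
    rw [Complex.ofReal_pow, ← Complex.mul_conj', trigSum, map_sum, Finset.sum_mul_sum]
    refine Finset.sum_congr rfl fun k _ ↦ Finset.sum_congr rfl fun l _ ↦ ?_
    rw [map_mul, ← fourier_neg, sub_eq_add_neg, fourier_add]
    ring
  rw [← Complex.ofReal_inj, ← intervalIntegral.integral_ofReal]
  simp_rw [expand]
  rw [intervalIntegral.integral_finsetSum
    fun k _ ↦ Continuous.intervalIntegrable (by fun_prop) _ _, Complex.ofReal_sum]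
  refine Finset.sum_congr rfl fun k hk ↦ ?_
  rw [intervalIntegral.integral_finsetSum
    fun l _ ↦ Continuous.intervalIntegrable (by fun_prop) _ _]
  simp_rw [intervalIntegral.integral_const_mul, integral_fourier_coe, sub_eq_zero, mul_ite,
    mul_zero, mul_one, Finset.sum_ite_eq, if_pos hk, Complex.mul_conj', Complex.ofReal_pow]

variable {S c} {S' : Finset ℤ} {c' : ℤ → ℂ} {C C' : ℝ}

lemma sqrt_integral_norm_trigSum_sq_le (hC : 0 ≤ C) (hc : ∀ k ∈ S, ‖c k‖ ≤ C) (a : ℝ) :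
    √(∫ x in a..(a + 1), ‖trigSum S c x‖ ^ 2) ≤ C * √S.card := by
  rw [integral_norm_trigSum_sq, Real.sqrt_le_left (by positivity), mul_pow,
    Real.sq_sqrt (Nat.cast_nonneg _), mul_comm, ← nsmul_eq_mul]
  exact Finset.sum_le_card_nsmul _ _ _ fun k hk ↦ by gcongr; exact hc k hk

lemma integral_norm_trigSum_mul_trigSum_le (hC : 0 ≤ C) (hC' : 0 ≤ C')
    (hc : ∀ k ∈ S, ‖c k‖ ≤ C) (hc' : ∀ k ∈ S', ‖c' k‖ ≤ C') (a : ℝ) :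
    ∫ x in a..(a + 1), ‖trigSum S c x * trigSum S' c' x‖
      ≤ C * C' * √(S.card * S'.card : ℝ) := by
  simp_rw [norm_mul]
  calc ∫ x in a..(a + 1), ‖trigSum S c x‖ * ‖trigSum S' c' x‖
      ≤ √(∫ x in a..(a + 1), ‖trigSum S c x‖ ^ 2)
          * √(∫ x in a..(a + 1), ‖trigSum S' c' x‖ ^ 2) :=
        integral_norm_mul_norm_le_sqrt_mul_sqrt (continuous_trigSum S c)
          (continuous_trigSum S' c') (by linarith)
    _ ≤ (C * √S.card) * (C' * √S'.card) := by
        gcongr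
        · exact sqrt_integral_norm_trigSum_sq_le hC hc a
        · exact sqrt_integral_norm_trigSum_sq_le hC' hc' a
    _ = C * C' * √(S.card * S'.card : ℝ) := by
        rw [Real.sqrt_mul (Nat.cast_nonneg _)]
        ring

end TrigSum

section ValleePoussinKernel

variable (n : ℕ)

/-- A kernel of de la Vallée-Poussin type: the normalised product of the exponential sums over
`[0, n]` and `[-2n, n]`. Its `j`-th Fourier coefficient, the proportion of the `a ∈ [0, n]` with
`j - a ∈ [-2n, n]`, is `1` for `|j| ≤ n`. -/
noncomputable def valleePoussinKernel (x : ℝ) : ℂ :=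
  ((n + 1 : ℕ) : ℂ)⁻¹
    * (trigSum (Finset.Icc 0 n) (fun _ ↦ 1) x * trigSum (Finset.Icc (-2 * n) n) (fun _ ↦ 1) x)

/-- The derivative of `valleePoussinKernel n`, expanded by the product rule. -/
noncomputable def valleePoussinKernelDeriv (x : ℝ) : ℂ :=
  ((n + 1 : ℕ) : ℂ)⁻¹
    * (trigSum (Finset.Icc 0 n) (fun k ↦ 2 * Real.pi * Complex.I * k) x
          * trigSum (Finset.Icc (-2 * n) n) (fun _ ↦ 1) x
        + trigSum (Finset.Icc 0 n) (fun _ ↦ 1) x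
          * trigSum (Finset.Icc (-2 * n) n) (fun k ↦ 2 * Real.pi * Complex.I * k) x)

lemma continuous_valleePoussinKernelDeriv : Continuous (valleePoussinKernelDeriv n) := by
  unfold valleePoussinKernelDeriv
  fun_prop

lemma hasDerivAt_valleePoussinKernel (x : ℝ) :
    HasDerivAt (valleePoussinKernel n) (valleePoussinKernelDeriv n x) x := by
  have sum_deriv (S : Finset ℤ) := hasDerivAt_trigSum S (fun _ ↦ 1) x
  simp only [one_mul] at sum_deriv
  exact ((sum_deriv _).mul (sum_deriv _)).const_mul _

lemma continuous_valleePoussinKernel : Continuous (valleePoussinKernel n) :=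
  continuous_iff_continuousAt.2 fun x ↦ (hasDerivAt_valleePoussinKernel n x).continuousAt

variable {n} in
lemma integral_norm_trigSum_Icc_mul_trigSum_Icc_le {c c' : ℤ → ℂ} {C C' : ℝ} (hC : 0 ≤ C)
    (hC' : 0 ≤ C') (hc : ∀ k ∈ Finset.Icc (0 : ℤ) n, ‖c k‖ ≤ C)
    (hc' : ∀ k ∈ Finset.Icc (-2 * n : ℤ) n, ‖c' k‖ ≤ C') (a : ℝ) :
    ∫ x in a..(a + 1), ‖trigSum (Finset.Icc 0 n) c x * trigSum (Finset.Icc (-2 * n) n) c' x‖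
      ≤ C * C' * (2 * (n + 1)) := by
  refine (integral_norm_trigSum_mul_trigSum_le hC hC' hc hc' a).trans ?_
  have card_left : (Finset.Icc (0 : ℤ) n).card = n + 1 := by simp
  have card_right : (Finset.Icc (-2 * n : ℤ) n).card = 3 * n + 1 := by
    rw [Int.card_Icc]
    omega
  gcongr
  rw [card_left, card_right, Real.sqrt_le_left (by positivity)]
  push_cast
  nlinarith [(n.cast_nonneg : (0 : ℝ) ≤ n)]

lemma integral_norm_valleePoussinKernel_le (a : ℝ) :
    ∫ x in a..(a + 1), ‖valleePoussinKernel n x‖ ≤ 2 := by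
  unfold valleePoussinKernel
  simp_rw [norm_mul (_⁻¹), intervalIntegral.integral_const_mul, norm_inv, Complex.norm_natCast]
  rw [inv_mul_le_iff₀ (by positivity)]
  have bound := integral_norm_trigSum_Icc_mul_trigSum_Icc_le (n := n) (c := fun _ ↦ 1)
    (c' := fun _ ↦ 1) zero_le_one zero_le_one (by simp) (by simp) a
  push_cast
  linarith

lemma norm_two_pi_I_mul_le {k : ℤ} {M : ℝ} (hk : |(k : ℝ)| ≤ M) :
    ‖(2 * Real.pi * Complex.I * k : ℂ)‖ ≤ 2 * Real.pi * M := by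
  have norm_eq : ‖(2 * Real.pi * Complex.I * k : ℂ)‖ = 2 * Real.pi * |(k : ℝ)| := by
    simp [abs_of_pos Real.pi_pos]
  rw [norm_eq]
  gcongr

lemma integral_norm_valleePoussinKernelDeriv_le (a : ℝ) :
    ∫ x in a..(a + 1), ‖valleePoussinKernelDeriv n x‖ ≤ 12 * Real.pi * n := by
  unfold valleePoussinKernelDeriv
  simp_rw [norm_mul (_⁻¹), intervalIntegral.integral_const_mul, norm_inv, Complex.norm_natCast]
  rw [inv_mul_le_iff₀ (by positivity)]
  have left_factor := integral_norm_trigSum_Icc_mul_trigSum_Icc_le (n := n)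
    (c := fun k ↦ 2 * Real.pi * Complex.I * k) (c' := fun _ ↦ 1) (C := 2 * Real.pi * n)
    (by positivity) zero_le_one
    (fun k hk ↦ norm_two_pi_I_mul_le <| by
      obtain ⟨hk_lower, hk_upper⟩ := Finset.mem_Icc.1 hk
      exact_mod_cast abs_le.2 ⟨by omega, hk_upper⟩) (by simp) a
  have right_factor := integral_norm_trigSum_Icc_mul_trigSum_Icc_le (n := n) (c := fun _ ↦ 1)
    (c' := fun k ↦ 2 * Real.pi * Complex.I * k) (C' := 2 * Real.pi * (2 * n))
    zero_le_one (by positivity) (by simp)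
    (fun k hk ↦ norm_two_pi_I_mul_le <| by
      obtain ⟨hk_lower, hk_upper⟩ := Finset.mem_Icc.1 hk
      exact_mod_cast abs_le.2 ⟨by omega, by omega⟩) a
  refine (intervalIntegral_norm_add_le (by fun_prop) (by fun_prop) (by linarith)).trans ?_
  push_cast
  linarith

variable {n}

lemma integral_fourier_mul_valleePoussinKernel {j : ℤ} (hj : |j| ≤ n) (x : ℝ) :
    ∫ t in (0 : ℝ)..1, fourier j (t : UnitAddCircle) * valleePoussinKernel n (x - t)
      = fourier j (x : UnitAddCircle) := by
  obtain ⟨hj_lower, hj_upper⟩ := abs_le.1 hj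
  have expand (t : ℝ) : fourier j (t : UnitAddCircle) * valleePoussinKernel n (x - t)
      = ((n + 1 : ℕ) : ℂ)⁻¹ * ∑ a ∈ Finset.Icc (0 : ℤ) n, ∑ b ∈ Finset.Icc (-2 * n : ℤ) n,
          fourier j (t : UnitAddCircle) * fourier (a + b) ((x - t : ℝ) : UnitAddCircle) := by
    simp_rw [valleePoussinKernel, trigSum, one_mul, Finset.sum_mul_sum, fourier_add,
      ← Finset.mul_sum]
    ring
  have frequency_count (a : ℤ) (ha : a ∈ Finset.Icc (0 : ℤ) n) :
      ∫ t in (0 : ℝ)..1, ∑ b ∈ Finset.Icc (-2 * n : ℤ) n,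
          fourier j (t : UnitAddCircle) * fourier (a + b) ((x - t : ℝ) : UnitAddCircle)
        = fourier j (x : UnitAddCircle) := by
    rw [Finset.mem_Icc] at ha
    rw [intervalIntegral.integral_finsetSum
      fun b _ ↦ Continuous.intervalIntegrable (by fun_prop) _ _]
    simp_rw [integral_fourier_mul_fourier_sub, ← eq_sub_iff_add_eq']
    rw [Finset.sum_ite_eq', if_pos (Finset.mem_Icc.2 (by omega))]
  simp_rw [expand]
  rw [intervalIntegral.integral_const_mul, intervalIntegral.integral_finsetSum
    fun a _ ↦ Continuous.intervalIntegrable (by fun_prop) _ _,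
    Finset.sum_congr rfl frequency_count, Finset.sum_const, Int.card_Icc, sub_zero,
    nsmul_eq_mul, ← Nat.cast_succ, Int.toNat_natCast,
    inv_mul_cancel_left₀ (Nat.cast_ne_zero.2 n.succ_ne_zero)]

end ValleePoussinKernel

section TrigPoly

/-- The complex trigonometric polynomials of degree at most `n` in one variable, as functions on
the real line: the span of the exponentials `e^{2πikx}` with `|k| ≤ n`. -/
def trigPoly (n : ℕ) : Submodule ℂ (ℝ → ℂ) :=
  Submodule.span ℂ {e | ∃ k : ℤ, |k| ≤ n ∧ (fun x : ℝ ↦ fourier k (x : UnitAddCircle)) = e}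

variable {n m : ℕ}

lemma fourier_mem_trigPoly {k : ℤ} (hk : |k| ≤ n) :
    (fun x : ℝ ↦ fourier k (x : UnitAddCircle)) ∈ trigPoly n :=
  Submodule.subset_span ⟨k, hk, rfl⟩

lemma cos_mem_trigPoly {j : ℕ} (hj : j ≤ n) :
    (fun x : ℝ ↦ (Real.cos (2 * Real.pi * j * x) : ℂ)) ∈ trigPoly n := by
  have euler : (fun x : ℝ ↦ (Real.cos (2 * Real.pi * j * x) : ℂ))
      = (2⁻¹ : ℂ) • ((fun x : ℝ ↦ fourier (j : ℤ) (x : UnitAddCircle))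
        + fun x : ℝ ↦ fourier (-j : ℤ) (x : UnitAddCircle)) := by
    ext x
    simp only [Pi.smul_apply, Pi.add_apply, fourier_coe_apply, smul_eq_mul, Complex.ofReal_cos,
      Complex.cos]
    push_cast
    ring_nf
  rw [euler]
  exact Submodule.smul_mem _ _ (add_mem (fourier_mem_trigPoly (by simpa using hj))
    (fourier_mem_trigPoly (by simpa using hj)))

lemma sin_mem_trigPoly {j : ℕ} (hj : j ≤ n) :
    (fun x : ℝ ↦ (Real.sin (2 * Real.pi * j * x) : ℂ)) ∈ trigPoly n := by
  have euler : (fun x : ℝ ↦ (Real.sin (2 * Real.pi * j * x) : ℂ))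
      = (Complex.I / 2) • ((fun x : ℝ ↦ fourier (-j : ℤ) (x : UnitAddCircle))
        - fun x : ℝ ↦ fourier (j : ℤ) (x : UnitAddCircle)) := by
    ext x
    simp only [Pi.smul_apply, Pi.sub_apply, fourier_coe_apply, smul_eq_mul, Complex.ofReal_sin,
      Complex.sin]
    push_cast
    ring_nf
  rw [euler]
  exact Submodule.smul_mem _ _ (sub_mem (fourier_mem_trigPoly (by simpa using hj))
    (fourier_mem_trigPoly (by simpa using hj)))

variable {g : ℝ → ℂ}

lemma continuous_of_mem_trigPoly (hg : g ∈ trigPoly n) : Continuous g := by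
  induction hg using Submodule.span_induction with
  | mem g hg =>
    obtain ⟨k, -, rfl⟩ := hg
    exact continuous_fourier_coe k
  | zero => exact continuous_zero
  | add g h _ _ ihg ihh => exact ihg.add ihh
  | smul c g _ ih => exact ih.const_smul c

lemma integral_mul_valleePoussinKernel_of_mem_trigPoly (hg : g ∈ trigPoly n) (x : ℝ) :
    ∫ t in (0 : ℝ)..1, g t * valleePoussinKernel n (x - t) = g x := by
  have hint {h : ℝ → ℂ} (hh : h ∈ trigPoly n) :
      IntervalIntegrable (fun t ↦ h t * valleePoussinKernel n (x - t)) volume 0 1 :=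
    ((continuous_of_mem_trigPoly hh).mul ((continuous_valleePoussinKernel n).comp
      (continuous_const.sub continuous_id))).intervalIntegrable _ _
  induction hg using Submodule.span_induction with
  | mem g hg =>
    obtain ⟨k, hk, rfl⟩ := hg
    exact integral_fourier_mul_valleePoussinKernel hk x
  | zero => simp
  | add g h hg hh ihg ihh =>
    simp_rw [Pi.add_apply, add_mul]
    rw [intervalIntegral.integral_add (hint hg) (hint hh), ihg, ihh]
  | smul c g _ ih =>
    simp_rw [Pi.smul_apply, smul_eq_mul, mul_assoc]
    rw [intervalIntegral.integral_const_mul, ih]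

variable {p : ℝ} {N : ℕ} {x : ℕ → ℝ}

lemma sum_enorm_sub_rpow_le_of_mem_trigPoly (hp : 1 ≤ p) (hg : g ∈ trigPoly n)
    (hx : ∀ i < N, x i ≤ x (i + 1)) (hN : x N = x 0 + 1) :
    ∑ i ∈ Finset.range N, ‖g (x (i + 1)) - g (x i)‖ₑ ^ p
      ≤ 40 ^ p * n * ∫⁻ t in Icc (0 : ℝ) 1, ‖g t‖ₑ ^ p := by
  refine (sum_enorm_sub_rpow_le_of_reproducing hp (continuous_of_mem_trigPoly hg)
    (integral_mul_valleePoussinKernel_of_mem_trigPoly hg) (hasDerivAt_valleePoussinKernel n)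
    (continuous_valleePoussinKernelDeriv n) (integral_norm_valleePoussinKernel_le n)
    (integral_norm_valleePoussinKernelDeriv_le n) hx hN).trans ?_
  refine mul_le_mul_left ?_ _
  have deriv_bound : ENNReal.ofReal (12 * Real.pi * n) ≤ 40 * n := by
    rw [← ENNReal.ofReal_natCast, ← ENNReal.ofReal_ofNat 40, ← ENNReal.ofReal_mul (by norm_num)]
    gcongr
    linarith [Real.pi_lt_d2]
  calc (2 * ENNReal.ofReal 2) ^ (p - 1) * ENNReal.ofReal (12 * Real.pi * n)
      ≤ 40 ^ (p - 1) * (40 * n) := by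
        gcongr
        norm_num
    _ = 40 ^ p * n := by
        rw [← mul_assoc, ENNReal.rpow_sub _ _ (by norm_num) (by norm_num), ENNReal.rpow_one,
          ENNReal.div_mul_cancel (by norm_num) (by norm_num)]

variable {T : ℝ → ℝ → ℂ} {M : ℕ} {y : ℕ → ℝ}

lemma sum_sum_enorm_mixed_sub_rpow_le_of_mem_trigPoly (hp : 1 ≤ p)
    (hT_left : ∀ v, (fun u ↦ T u v) ∈ trigPoly n) (hT_right : ∀ u, T u ∈ trigPoly m)
    (hx : ∀ i < M, x i ≤ x (i + 1)) (hM : x M = x 0 + 1)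
    (hy : ∀ j < N, y j ≤ y (j + 1)) (hN : y N = y 0 + 1) :
    ∑ i ∈ Finset.range M, ∑ j ∈ Finset.range N,
        ‖T (x (i + 1)) (y (j + 1)) - T (x (i + 1)) (y j)
          - T (x i) (y (j + 1)) + T (x i) (y j)‖ₑ ^ p
      ≤ 40 ^ p * n * (40 ^ p * m
        * ∫⁻ u in Icc (0 : ℝ) 1, ∫⁻ v in Icc (0 : ℝ) 1, ‖T u v‖ₑ ^ p) := by
  have hstrip (j : ℕ) : (fun u ↦ T u (y (j + 1)) - T u (y j)) ∈ trigPoly n :=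
    sub_mem (hT_left (y (j + 1))) (hT_left (y j))
  have strip_bound (j : ℕ) := sum_enorm_sub_rpow_le_of_mem_trigPoly hp (hstrip j) hx hM
  have hconst : (40 : ℝ≥0∞) ^ p * m ≠ ∞ :=
    ENNReal.mul_ne_top (ENNReal.rpow_ne_top_of_nonneg (by linarith) (by norm_num))
      (ENNReal.natCast_ne_top m)
  rw [Finset.sum_comm]
  simp_rw [sub_add]
  calc ∑ j ∈ Finset.range N, ∑ i ∈ Finset.range M,
        ‖T (x (i + 1)) (y (j + 1)) - T (x (i + 1)) (y j)
          - (T (x i) (y (j + 1)) - T (x i) (y j))‖ₑ ^ p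
      ≤ ∑ j ∈ Finset.range N,
          40 ^ p * n * ∫⁻ u in Icc (0 : ℝ) 1, ‖T u (y (j + 1)) - T u (y j)‖ₑ ^ p :=
        Finset.sum_le_sum fun j _ ↦ strip_bound j
    _ = 40 ^ p * n * ∫⁻ u in Icc (0 : ℝ) 1,
          ∑ j ∈ Finset.range N, ‖T u (y (j + 1)) - T u (y j)‖ₑ ^ p := by
        rw [← Finset.mul_sum, lintegral_finsetSum _ fun j _ ↦
          (continuous_of_mem_trigPoly (hstrip j)).measurable.enorm.pow_const p]
    _ ≤ 40 ^ p * n * ∫⁻ u in Icc (0 : ℝ) 1,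
          (40 ^ p * m * ∫⁻ v in Icc (0 : ℝ) 1, ‖T u v‖ₑ ^ p) := by
        gcongr with u
        exact sum_enorm_sub_rpow_le_of_mem_trigPoly hp (hT_right u) hy hN
    _ = 40 ^ p * n * (40 ^ p * m
          * ∫⁻ u in Icc (0 : ℝ) 1, ∫⁻ v in Icc (0 : ℝ) 1, ‖T u v‖ₑ ^ p) := by
        rw [lintegral_const_mul' _ _ hconst]

end TrigPoly

section TwoVariables

variable {n m : ℕ} {T : ℝ → ℝ → ℝ} {p : ℝ}

lemma isTrigPoly2_swap (hT : IsTrigPoly2 n m T) : IsTrigPoly2 m n (fun y x ↦ T x y) := by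
  obtain ⟨a, b, c, d, hT⟩ := hT
  refine ⟨fun k j ↦ a j k, fun k j ↦ c j k, fun k j ↦ b j k, fun k j ↦ d j k, fun y x ↦ ?_⟩
  simp only [hT]
  rw [Finset.sum_comm]
  refine Finset.sum_congr rfl fun k _ ↦ Finset.sum_congr rfl fun j _ ↦ ?_
  ring

lemma section_mem_trigPoly (hT : IsTrigPoly2 n m T) (y : ℝ) :
    (fun x ↦ (T x y : ℂ)) ∈ trigPoly n := by
  obtain ⟨a, b, c, d, hT⟩ := hT
  have collect : (fun x ↦ (T x y : ℂ))
      = ∑ j ∈ Finset.range (n + 1), ∑ k ∈ Finset.range (m + 1),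
        (((a j k * Real.cos (2 * Real.pi * k * y)
              + b j k * Real.sin (2 * Real.pi * k * y) : ℝ) : ℂ)
            • (fun x : ℝ ↦ (Real.cos (2 * Real.pi * j * x) : ℂ))
          + ((c j k * Real.cos (2 * Real.pi * k * y)
              + d j k * Real.sin (2 * Real.pi * k * y) : ℝ) : ℂ)
            • fun x : ℝ ↦ (Real.sin (2 * Real.pi * j * x) : ℂ)) := by
    ext x
    simp only [hT, Finset.sum_apply, Pi.add_apply, Pi.smul_apply, smul_eq_mul,
      ← Complex.ofReal_mul, ← Complex.ofReal_add, ← Complex.ofReal_sum]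
    congr! 3
    ring
  rw [collect]
  refine Submodule.sum_mem _ fun j hj ↦ Submodule.sum_mem _ fun k _ ↦ ?_
  have hjn : j ≤ n := Nat.lt_succ_iff.1 (Finset.mem_range.1 hj)
  exact add_mem (Submodule.smul_mem _ _ (cos_mem_trigPoly hjn))
    (Submodule.smul_mem _ _ (sin_mem_trigPoly hjn))

lemma ofReal_abs_rpow (hp : 0 ≤ p) (r : ℝ) : ENNReal.ofReal (|r| ^ p) = ‖r‖ₑ ^ p := by
  rw [← ENNReal.ofReal_rpow_of_nonneg (abs_nonneg r) hp, ← Real.enorm_eq_ofReal_abs]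

lemma lpNorm2_rpow_eq (hp : 0 < p) (f : ℝ → ℝ → ℝ) :
    lpNorm2 p f ^ p = ∫⁻ x in Icc (0 : ℝ) 1, ∫⁻ y in Icc (0 : ℝ) 1, ‖f x y‖ₑ ^ p := by
  simp_rw [lpNorm2, ofReal_abs_rpow hp.le]
  rw [← ENNReal.rpow_mul, one_div_mul_cancel hp.ne', ENNReal.rpow_one]

lemma vp2_le_of_sum_sum_enorm_rpow_le (hp : 0 < p) {f : ℝ → ℝ → ℝ} {V : ℝ≥0∞}
    (hV : ∀ (M N : ℕ) (x y : ℕ → ℝ), (∀ i < M, x i < x (i + 1)) → x M = x 0 + 1 →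
      (∀ j < N, y j < y (j + 1)) → y N = y 0 + 1 →
      ∑ i ∈ Finset.range M, ∑ j ∈ Finset.range N,
        ‖f (x (i + 1)) (y (j + 1)) - f (x (i + 1)) (y j)
          - f (x i) (y (j + 1)) + f (x i) (y j)‖ₑ ^ p ≤ V ^ p) :
    vp2 p f ≤ V := by
  simp only [vp2, iSup_le_iff]
  intro M N x y hx hM hy hN
  rw [← ENNReal.ofReal_rpow_of_nonneg (by positivity) (by positivity), one_div,
    ENNReal.rpow_inv_le_iff hp, ENNReal.ofReal_sum_of_nonneg fun i _ ↦ by positivity]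
  simp_rw [ENNReal.ofReal_sum_of_nonneg fun (j : ℕ) (_ : j ∈ Finset.range N) ↦
    Real.rpow_nonneg (abs_nonneg _) p, ofReal_abs_rpow hp.le]
  exact hV M N x y hx hM hy hN

lemma sum_sum_enorm_mixed_sub_rpow_le_of_isTrigPoly2 (hp : 1 ≤ p) (hT : IsTrigPoly2 n m T)
    {M N : ℕ} {x y : ℕ → ℝ} (hx : ∀ i < M, x i ≤ x (i + 1)) (hM : x M = x 0 + 1)
    (hy : ∀ j < N, y j ≤ y (j + 1)) (hN : y N = y 0 + 1) :
    ∑ i ∈ Finset.range M, ∑ j ∈ Finset.range N,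
        ‖T (x (i + 1)) (y (j + 1)) - T (x (i + 1)) (y j)
          - T (x i) (y (j + 1)) + T (x i) (y j)‖ₑ ^ p
      ≤ 40 ^ p * n * (40 ^ p * m * lpNorm2 p T ^ p) := by
  have enorm_ofReal (r : ℝ) : ‖(r : ℂ)‖ₑ = ‖r‖ₑ := by
    rw [← ofReal_norm, Complex.norm_real, ofReal_norm]
  have complex_bound := sum_sum_enorm_mixed_sub_rpow_le_of_mem_trigPoly
    (T := fun u v ↦ (T u v : ℂ)) hp (section_mem_trigPoly hT)
    (section_mem_trigPoly (isTrigPoly2_swap hT)) hx hM hy hN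
  simp_rw [← Complex.ofReal_sub, ← Complex.ofReal_add, enorm_ofReal] at complex_bound
  rwa [lpNorm2_rpow_eq (by linarith)]

lemma ofReal_mul_rpow_one_div_mul_rpow (hp : 0 < p) (L : ℝ≥0∞) :
    (ENNReal.ofReal (1600 * ((n : ℝ) * m) ^ (1 / p)) * L) ^ p
      = 40 ^ p * n * (40 ^ p * m * L ^ p) := by
  have constant : ENNReal.ofReal 1600 = 40 * 40 := by norm_num
  rw [ENNReal.ofReal_mul (by norm_num), constant,
    ← ENNReal.ofReal_rpow_of_nonneg (by positivity) (by positivity),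
    ENNReal.ofReal_mul (by positivity), ENNReal.ofReal_natCast, ENNReal.ofReal_natCast]
  simp only [ENNReal.mul_rpow_of_nonneg _ _ hp.le]
  rw [← ENNReal.rpow_mul, one_div_mul_cancel hp.ne', ENNReal.rpow_one]
  ring

end TwoVariables

/-- **Oskolkov's inequality.** There is an absolute constant `A > 0` such
that `v_p⁽²⁾(T) ≤ A (nm)^{1/p} ‖T‖_p` for every `1 ≤ p < ∞` and every trigonometric
polynomial `T` of degree `(n,m)`. -/
theorem statement13 :
    ∃ A : ℝ, 0 < A ∧
      ∀ (p : ℝ), 1 ≤ p → ∀ (n m : ℕ), 1 ≤ n → 1 ≤ m → ∀ T : ℝ → ℝ → ℝ,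
        IsTrigPoly2 n m T →
          vp2 p T ≤ ENNReal.ofReal (A * ((n : ℝ) * m) ^ (1 / p)) * lpNorm2 p T := by
  refine ⟨1600, by norm_num, fun p hp n m _ _ T hT ↦ ?_⟩
  have hp0 : 0 < p := by linarith
  refine vp2_le_of_sum_sum_enorm_rpow_le hp0 fun M N x y hx hM hy hN ↦ ?_
  rw [ofReal_mul_rpow_one_div_mul_rpow hp0]
  exact sum_sum_enorm_mixed_sub_rpow_le_of_isTrigPoly2 hp hT (fun i hi ↦ (hx i hi).le) hM
    (fun j hj ↦ (hy j hj).le) hN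
end
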